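/- arXiv:2410.00276 — 9 statements merged into one kernel-verified Lean document; each statement's English description precedes it below -/
import Mathlib

section
/- Let I and J be types. For an injective function g : I → J, define the pointed map g̃ : Option J → Option I by g̃ (some j) = some i if g i = j (such i is unique by injectivity), g̃ (some j) = none if j is not in the range of g, and g̃ none = none. Then the assignment g ↦ g̃ is a bijection from the set of injective functions I → J onto the set of functions h : Option J → Option I such that h none = none, h is surjective, and h is injective away from the basepoint (i.e. h a = h b ≠ none implies a = b). -/
open Classical in
/-- The pointed map `g̃ : Option J → Option I` associated to a function `g : I → J`:
`g̃ (some j) = some i` for the (chosen) `i` with `g i = j` when `j` is in the range of `g`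
(this `i` is unique when `g` is injective), `g̃ (some j) = none` when `j` is not in the
range of `g`, and `g̃ none = none`. -/
noncomputable def tilde {I J : Type} (g : I → J) : Option J → Option I :=
  fun o => match o with
  | none => none
  | some j => if h : ∃ i, g i = j then some h.choose else none

/-! On `some j`, the map `tilde g` is Mathlib's partial inverse `Function.partialInv g j`. A partial
inverse and the function it inverts determine each other, and a pointed map `h` is surjective and
injective away from the basepoint exactly when `h ∘ some` is the partial inverse of some function;
that function is the preimage of `h` under `g ↦ tilde g`. -/

section PartialInverse

variable {α β : Type*} {f f' : α → β} {p q : β → Option α}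

theorem isPartialInv_right_unique (hp : Function.IsPartialInv f p)
    (hq : Function.IsPartialInv f q) : p = q :=
  funext fun y => Option.ext fun x => (hp x y).trans (hq x y).symm

theorem isPartialInv_left_unique (hf : Function.IsPartialInv f p)
    (hf' : Function.IsPartialInv f' p) : f = f' :=
  funext fun x => ((hf' x (f x)).1 (hf.eq x)).symm

end PartialInverse

section PointedMap

variable {α β : Type*}

/-- Injectivity away from the basepoint `none` of the codomain: fibres over points other than
`none` have at most one element. The domain is an arbitrary type. -/
def InjectiveAwayFromNone (h : α → Option β) : Prop :=
  ∀ a b : α, h a = h b → h a ≠ none → a = b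

theorem InjectiveAwayFromNone.eq_of_eq_some {h : α → Option β} (hh : InjectiveAwayFromNone h)
    {a b : α} {y : β} (ha : h a = some y) (hb : h b = some y) : a = b :=
  hh a b (ha.trans hb.symm) (ha ▸ Option.some_ne_none y)

variable {h : Option β → Option α} {f : α → β}

theorem eq_some_iff_of_isPartialInv (h_none : h none = none)
    (hf : Function.IsPartialInv f (h ∘ some)) {o : Option β} {x : α} :
    h o = some x ↔ o = some (f x) := by
  cases o with
  | none => simp [h_none]
  | some y => simpa [eq_comm] using hf x y

theorem surjective_of_isPartialInv (h_none : h none = none)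
    (hf : Function.IsPartialInv f (h ∘ some)) : Function.Surjective h
  | none => ⟨none, h_none⟩
  | some x => ⟨some (f x), (eq_some_iff_of_isPartialInv h_none hf).2 rfl⟩

theorem injectiveAwayFromNone_of_isPartialInv (h_none : h none = none)
    (hf : Function.IsPartialInv f (h ∘ some)) : InjectiveAwayFromNone h := by
  intro a b hab ha
  obtain ⟨x, hax⟩ := Option.ne_none_iff_exists'.1 ha
  have a_eq : a = some (f x) := (eq_some_iff_of_isPartialInv h_none hf).1 hax
  have b_eq : b = some (f x) := (eq_some_iff_of_isPartialInv h_none hf).1 (hab ▸ hax)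
  exact a_eq.trans b_eq.symm

theorem exists_some_eq_some_of_surjective (h_none : h none = none)
    (h_surj : Function.Surjective h) (x : α) : ∃ y, h (some y) = some x := by
  obtain ⟨_ | y, hy⟩ := h_surj (some x)
  · simp [h_none] at hy
  · exact ⟨y, hy⟩

theorem exists_isPartialInv (h_none : h none = none) (h_surj : Function.Surjective h)
    (h_inj : InjectiveAwayFromNone h) : ∃ f : α → β, Function.IsPartialInv f (h ∘ some) := by
  choose f hf using exists_some_eq_some_of_surjective h_none h_surj
  refine ⟨f, fun x y => ⟨fun hy => ?_, fun hy => hy ▸ hf x⟩⟩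
  exact Option.some.inj (h_inj.eq_of_eq_some (hf x) hy)

end PointedMap

section Tilde

variable {I J : Type} {g : I → J}

theorem tilde_comp_some (g : I → J) : tilde g ∘ some = Function.partialInv g :=
  rfl

theorem isPartialInv_tilde_comp_some (hg : Function.Injective g) :
    Function.IsPartialInv g (tilde g ∘ some) :=
  tilde_comp_some g ▸ hg.isPartialInv

theorem tilde_eq_of_isPartialInv {h : Option J → Option I} (h_none : h none = none)
    (hg : Function.IsPartialInv g (h ∘ some)) : tilde g = h := by
  have comp_some_eq : tilde g ∘ some = h ∘ some :=
    isPartialInv_right_unique (isPartialInv_tilde_comp_some hg.injective) hg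
  funext o
  cases o with
  | none => exact h_none.symm
  | some j => exact congrFun comp_some_eq j

end Tilde

/-- The assignment `g ↦ g̃` is a bijection from the set of injective functions `I → J`
onto the set of pointed maps `h : Option J → Option I` (i.e. `h none = none`) which are
surjective and injective away from the basepoint. -/
theorem stmt0 (I J : Type) :
    Set.BijOn (fun g : I → J => tilde g)
      {g : I → J | Function.Injective g}
      {h : Option J → Option I |
        h none = none ∧ Function.Surjective h ∧
        ∀ a b : Option J, h a = h b → h a ≠ none → a = b} := by
  refine ⟨fun g hg => ?mapsTo, fun g hg g' hg' tilde_eq => ?injOn, ?surjOn⟩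
  case mapsTo =>
    have g_inv : Function.IsPartialInv g (tilde g ∘ some) := isPartialInv_tilde_comp_some hg
    exact ⟨rfl, surjective_of_isPartialInv rfl g_inv,
      injectiveAwayFromNone_of_isPartialInv rfl g_inv⟩
  case injOn =>
    have tilde_eq : tilde g = tilde g' := tilde_eq
    exact isPartialInv_left_unique (isPartialInv_tilde_comp_some hg)
      (tilde_eq ▸ isPartialInv_tilde_comp_some hg')
  case surjOn =>
    rintro h ⟨h_none, h_surj, h_inj⟩
    obtain ⟨g, g_inv⟩ := exists_isPartialInv h_none h_surj h_inj
    exact ⟨g, g_inv.injective, tilde_eq_of_isPartialInv h_none g_inv⟩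
end

section
/- Let R be a ring and let (X, d) be a chain complex of pointed sets. For each n ∈ ℤ let Mₙ be the R-module of finitely supported functions (Xₙ \ {∗}) →₀ R, and let Dₙ : Mₙ → Mₙ₋₁ be the R-linear map determined on basis vectors by Dₙ(e_x) = e_{dₙ x} if dₙ x ≠ ∗, and Dₙ(e_x) = 0 if dₙ x = ∗. Then Dₙ₋₁ ∘ Dₙ = 0 for all n, and for each n there is an R-module isomorphism (ker Dₙ) / (range Dₙ₊₁) ≅ (Hₙ(X) \ {∗}) →₀ R, i.e. the homology of the complex of free R-modules is free on the set-level homology. -/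
/-- The data of a (possible) chain complex of pointed sets: a ℤ-indexed family of types
`X n` with basepoints `pt n` and differentials `d n : X n → X (n-1)`. -/
structure PreCC where
  X : ℤ → Type
  pt : ∀ n, X n
  d : ∀ n, X n → X (n - 1)

/-- `C` is a chain complex of pointed sets: the differentials are pointed, injective away
from the basepoint, and consecutive differentials compose to the constant map at the
basepoint. -/
def PreCC.IsComplex (C : PreCC) : Prop :=
  (∀ n, C.d n (C.pt n) = C.pt (n - 1)) ∧
  (∀ n, ∀ a b : C.X n, C.d n a = C.d n b → C.d n a ≠ C.pt (n - 1) → a = b) ∧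
  (∀ n, ∀ x : C.X n, C.d (n - 1) (C.d n x) = C.pt (n - 1 - 1))

/-- Transport along an equality of indices. -/
def PreCC.castX (C : PreCC) {m n : ℤ} (h : m = n) : C.X m → C.X n :=
  fun x => h ▸ x

/-- Membership in the `n`-th homology `Hₙ(C) = {x ∈ Xₙ : x ≠ ∗, dₙ x = ∗, x ∉ dₙ₊₁(Xₙ₊₁)} ∪ {∗}`. -/
def Hmem (C : PreCC) (n : ℤ) (x : C.X n) : Prop :=
  x = C.pt n ∨ (x ≠ C.pt n ∧ C.d n x = C.pt (n - 1) ∧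
    ∀ z : C.X (n + 1), C.castX (show n + 1 - 1 = n by omega) (C.d (n + 1) z) ≠ x)

/-- The `n`-th homology of `C`, as a pointed set. -/
def HT (C : PreCC) (n : ℤ) : Type := {x : C.X n // Hmem C n x}

/-- The basepoint of the `n`-th homology. -/
def Hpt (C : PreCC) (n : ℤ) : HT C n := ⟨C.pt n, Or.inl rfl⟩

/-- A chain map `C → D`: a family of pointed maps, each injective away from the
basepoint, commuting with the differentials. -/
def IsChainMap (C D : PreCC) (f : ∀ n, C.X n → D.X n) : Prop :=
  (∀ n, f n (C.pt n) = D.pt n) ∧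
  (∀ n, ∀ a b : C.X n, f n a = f n b → f n a ≠ D.pt n → a = b) ∧
  (∀ n, ∀ x : C.X n, f (n - 1) (C.d n x) = D.d n (f n x))

open Classical in
/-- The induced map on homology: `x ↦ fₙ(x)` if `fₙ(x) ∈ Hₙ(D)`, and `∗` otherwise. -/
noncomputable def Hmap (C D : PreCC) (f : ∀ n, C.X n → D.X n) (n : ℤ) :
    HT C n → HT D n :=
  fun x => if h : Hmem D n (f n x.1) then ⟨f n x.1, h⟩ else Hpt D n

/-- A chain complex of pointed sets is exact if all its homology pointed sets are trivial. -/
def PreCC.Exact (C : PreCC) : Prop :=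
  ∀ n, ∀ x : C.X n, Hmem C n x → x = C.pt n

open Classical in
/-- The differential of the associated complex of free `R`-modules
`Mₙ = (Xₙ \ {∗}) →₀ R`, determined on basis vectors by `Dₙ(e_x) = e_{dₙ x}` if
`dₙ x ≠ ∗` and `Dₙ(e_x) = 0` if `dₙ x = ∗`. -/
noncomputable def Dmap (C : PreCC) (R : Type) [Ring R] (n : ℤ) :
    ({x : C.X n // x ≠ C.pt n} →₀ R) →ₗ[R]
      ({x : C.X (n - 1) // x ≠ C.pt (n - 1)} →₀ R) :=
  Finsupp.lsum ℕ fun x : {x : C.X n // x ≠ C.pt n} =>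
    if h : C.d n x.1 ≠ C.pt (n - 1) then Finsupp.lsingle ⟨C.d n x.1, h⟩ else 0

/-- Transport of the free modules along an equality of indices. -/
noncomputable def castM (C : PreCC) (R : Type) [Ring R] {m n : ℤ} (h : m = n) :
    ({x : C.X m // x ≠ C.pt m} →₀ R) ≃ₗ[R] ({x : C.X n // x ≠ C.pt n} →₀ R) := by
  subst h; exact LinearEquiv.refl R _

/-- The quotient of a submodule `p` by a submodule `q` of `p`. -/
noncomputable abbrev SubQuot {R M : Type} [Ring R] [AddCommGroup M] [Module R M]
    (p : Submodule R M) (q : Submodule R p) : Type :=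
  @HasQuotient.Quotient ↥p (Submodule R ↥p)
    (@Submodule.hasQuotient R ↥p _ inferInstance inferInstance) q

/-!
Both the cycles and the boundaries of the linearised complex are coordinate submodules of `Mₙ`.
Since `dₙ` is injective away from the basepoint, the coefficient of `Dₙ f` at `dₙ x ≠ ∗` is the
coefficient of `f` at `x`, so `ker Dₙ` consists of the `f` supported on `{x | dₙ x = ∗}`; and
`range Dₙ₊₁` consists of the `f` supported on the image of `dₙ₊₁`. The quotient of the functions
supported on `s` by those supported on `t` is free on `s \ t`.
-/

section Supported

variable {α R M : Type*} [Semiring R] [AddCommMonoid M] [Module R M]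

theorem lsubtypeDomain_comp_subtype_supported_surjective {s u : Set α} (hus : u ⊆ s) :
    Function.Surjective
      ((Finsupp.lsubtypeDomain u : (α →₀ M) →ₗ[R] u →₀ M) ∘ₗ
        (Finsupp.supported M R s).subtype) := by
  classical
  intro g
  have g_mem : g.extendDomain ∈ Finsupp.supported M R s :=
    (Finsupp.support_extendDomain_subset g).trans hus
  exact ⟨⟨g.extendDomain, g_mem⟩, Finsupp.subtypeDomain_extendDomain g⟩

theorem ker_lsubtypeDomain_diff_comp_subtype_supported (s t : Set α) :
    LinearMap.ker ((Finsupp.lsubtypeDomain (s \ t) : (α →₀ M) →ₗ[R] ↥(s \ t) →₀ M) ∘ₗ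
        (Finsupp.supported M R s).subtype) =
      (Finsupp.supported M R t).comap (Finsupp.supported M R s).subtype := by
  ext ⟨f, hf⟩
  rw [Finsupp.mem_supported'] at hf
  simp only [LinearMap.mem_ker, LinearMap.comp_apply, Submodule.subtype_apply,
    Finsupp.lsubtypeDomain_apply, Finsupp.subtypeDomain_eq_zero_iff', Submodule.mem_comap,
    Finsupp.mem_supported']
  exact ⟨fun h x hxt => by_cases (fun hxs : x ∈ s => h x ⟨hxs, hxt⟩) (hf x),
    fun h x hx => h x hx.2⟩

end Supported

/-- The functions supported on `s` modulo those supported on `t` are the functions on `s \ t`, by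
restriction. The denominator is the intersection of the two submodules, as a submodule of the
numerator. -/
noncomputable def supportedQuotientEquiv {α R M : Type*} [Ring R] [AddCommGroup M] [Module R M]
    (s t : Set α) :
    (Finsupp.supported M R s ⧸
        (Finsupp.supported M R t).comap (Finsupp.supported M R s).subtype) ≃ₗ[R]
      (↥(s \ t) →₀ M) :=
  (Submodule.quotEquivOfEq _ _ (ker_lsubtypeDomain_diff_comp_subtype_supported s t).symm).trans
    (LinearMap.quotKerEquivOfSurjective _
      (lsubtypeDomain_comp_subtype_supported_surjective Set.sdiff_subset))

namespace PreCC

variable (C : PreCC)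

/-- The non-basepoint elements of `Xₙ` that `dₙ` sends to the basepoint. -/
def cycles (n : ℤ) : Set {x : C.X n // x ≠ C.pt n} :=
  {x | C.d n x = C.pt (n - 1)}

/-- The non-basepoint elements of `Xₙ` in the image of `dₘ`, where `m - 1 = n`. Keeping `m` and `n`
as separate variables lets the transport `castX` be eliminated by substitution. -/
def boundaries {m n : ℤ} (e : m - 1 = n) : Set {x : C.X n // x ≠ C.pt n} :=
  {x | ∃ z, C.castX e (C.d m z) = x}

theorem hmem_iff_mem_cycles_diff_boundaries {n : ℤ} (e : n + 1 - 1 = n)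
    (x : {x : C.X n // x ≠ C.pt n}) :
    Hmem C n x ↔ x ∈ C.cycles n \ C.boundaries e := by
  simp [Hmem, cycles, boundaries, x.2]

/-- The set-level homology without its basepoint is the set of cycles that are not boundaries. -/
def homologyEquiv {n : ℤ} (e : n + 1 - 1 = n) :
    {x : C.X n // Hmem C n x ∧ x ≠ C.pt n} ≃ ↥(C.cycles n \ C.boundaries e) :=
  (Equiv.subtypeEquivRight fun _ => and_comm).trans <|
    (Equiv.subtypeSubtypeEquivSubtypeInter (· ≠ C.pt n) (Hmem C n)).symm.trans <|
      Equiv.subtypeEquivRight (C.hmem_iff_mem_cycles_diff_boundaries e)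

end PreCC

section Dmap

variable {C : PreCC} {R : Type} [Ring R] {n : ℤ}

theorem Dmap_single_of_ne {x : {x : C.X n // x ≠ C.pt n}} (hx : C.d n x ≠ C.pt (n - 1)) (r : R) :
    Dmap C R n (Finsupp.single x r) = Finsupp.single ⟨C.d n x, hx⟩ r := by
  simp [Dmap, hx]

theorem Dmap_single_of_eq {x : {x : C.X n // x ≠ C.pt n}} (hx : C.d n x = C.pt (n - 1)) (r : R) :
    Dmap C R n (Finsupp.single x r) = 0 := by
  simp [Dmap, hx]

theorem Dmap_apply_d (hinj : ∀ a b : C.X n, C.d n a = C.d n b → C.d n a ≠ C.pt (n - 1) → a = b)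
    {x : {x : C.X n // x ≠ C.pt n}} (hx : C.d n x ≠ C.pt (n - 1))
    (f : {x : C.X n // x ≠ C.pt n} →₀ R) :
    Dmap C R n f ⟨C.d n x, hx⟩ = f x := by
  classical
  induction f using Finsupp.induction_linear with
  | zero => simp
  | add f g hf hg => simp [hf, hg]
  | single y r =>
    by_cases hy : C.d n y = C.pt (n - 1)
    · have hyx : y ≠ x := fun h => hx (h ▸ hy)
      simp [Dmap_single_of_eq hy, hyx]
    · have hd : C.d n y = C.d n x ↔ y = x :=
        ⟨fun h => Subtype.ext (hinj _ _ h hy), fun h => h ▸ rfl⟩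
      simp [Dmap_single_of_ne hy, Finsupp.single_apply, hd]

theorem ker_Dmap (hinj : ∀ a b : C.X n, C.d n a = C.d n b → C.d n a ≠ C.pt (n - 1) → a = b) :
    LinearMap.ker (Dmap C R n) = Finsupp.supported R R (C.cycles n) := by
  apply le_antisymm
  · intro f hf
    rw [Finsupp.mem_supported']
    intro x hx
    rw [← Dmap_apply_d hinj hx f, LinearMap.mem_ker.mp hf, Finsupp.zero_apply]
  · rw [Finsupp.supported_eq_span_single, Submodule.span_le]
    rintro _ ⟨x, hx, rfl⟩
    exact Dmap_single_of_eq hx 1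

theorem range_Dmap (hpt : C.d n (C.pt n) = C.pt (n - 1)) :
    LinearMap.range (Dmap C R n) = Finsupp.supported R R (C.boundaries (Eq.refl (n - 1))) := by
  apply le_antisymm
  · rintro _ ⟨f, rfl⟩
    induction f using Finsupp.induction_linear with
    | zero => simp
    | add f g hf hg => exact map_add (Dmap C R n) f g ▸ add_mem hf hg
    | single x r =>
      by_cases hx : C.d n x = C.pt (n - 1)
      · simp [Dmap_single_of_eq hx]
      · rw [Dmap_single_of_ne hx]
        exact Finsupp.single_mem_supported R r ⟨x, rfl⟩
  · rw [Finsupp.supported_eq_span_single, Submodule.span_le]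
    rintro _ ⟨⟨_, hdz⟩, ⟨z, rfl⟩, rfl⟩
    have hz : z ≠ C.pt n := fun h => hdz (h ▸ hpt)
    exact ⟨Finsupp.single ⟨z, hz⟩ 1, Dmap_single_of_ne hdz 1⟩

theorem range_castM_comp_Dmap {m : ℤ} (e : m - 1 = n) (hpt : C.d m (C.pt m) = C.pt (m - 1)) :
    LinearMap.range ((castM C R e).toLinearMap.comp (Dmap C R m)) =
      Finsupp.supported R R (C.boundaries e) := by
  subst e
  exact range_Dmap hpt

theorem Dmap_comp_Dmap (hC : C.IsComplex) : (Dmap C R (n - 1)).comp (Dmap C R n) = 0 := by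
  obtain ⟨hpt, hinj, hdd⟩ := hC
  rw [← LinearMap.range_le_ker_iff, range_Dmap (hpt n), ker_Dmap (hinj (n - 1))]
  apply Finsupp.supported_mono
  rintro ⟨_, _⟩ ⟨z, rfl⟩
  exact hdd n z

end Dmap

/-- For a chain complex of pointed sets `C` and a ring `R`, the free modules
`Mₙ = (Xₙ \ {∗}) →₀ R` with the differentials `Dₙ` form a chain complex of `R`-modules
(`Dₙ₋₁ ∘ Dₙ = 0`), and its `n`-th homology `ker Dₙ / range Dₙ₊₁` is isomorphic as an
`R`-module to the free module on `Hₙ(C) \ {∗}`. -/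
theorem stmt2 (R : Type) [Ring R] (C : PreCC) (hC : C.IsComplex) (n : ℤ) :
    (Dmap C R (n - 1)).comp (Dmap C R n) = 0 ∧
    Nonempty
      (SubQuot (LinearMap.ker (Dmap C R n))
          ((LinearMap.range ((castM C R (show n + 1 - 1 = n by omega)).toLinearMap.comp
            (Dmap C R (n + 1)))).comap (LinearMap.ker (Dmap C R n)).subtype)
        ≃ₗ[R] ({x : C.X n // Hmem C n x ∧ x ≠ C.pt n} →₀ R)) := by
  refine ⟨Dmap_comp_Dmap hC, ?_⟩
  obtain ⟨hpt, hinj, -⟩ := hC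
  rw [ker_Dmap (hinj n), range_castM_comp_Dmap _ (hpt (n + 1))]
  exact ⟨(supportedQuotientEquiv _ _).trans (Finsupp.domLCongr (C.homologyEquiv _).symm)⟩
end

section
/- Let R be a nontrivial ring and let (X, d) be a chain complex of pointed sets, with associated complex of free R-modules Mₙ = (Xₙ \ {∗}) →₀ R and differentials Dₙ determined by Dₙ(e_x) = e_{dₙ x} if dₙ x ≠ ∗ and 0 otherwise. Then for each n, ker Dₙ = range Dₙ₊₁ if and only if Hₙ(X) = {∗}. In particular, the complex of free R-modules is exact if and only if the chain complex of pointed sets is exact. -/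
/-! A map `f` of pointed sets that is injective away from the basepoint induces a map of reduced
free modules which, on basis vectors, either kills them or sends them injectively to basis vectors.
Hence both its kernel and its range are spanned by basis vectors: the kernel by those indexed by
`f ⁻¹(∗)`, the range by those indexed by the image of `f`. Over a nontrivial ring such a coordinate
submodule determines its index set, so exactness of the modules is exactness of the sets. -/

section Supported

variable {ι M R : Type*} [Semiring R] [AddCommMonoid M] [Module R M]

theorem supported_le_iff {s : Set ι} {p : Submodule R (ι →₀ M)} :
    Finsupp.supported M R s ≤ p ↔ ∀ i ∈ s, ∀ r, Finsupp.single i r ∈ p := by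
  refine ⟨fun h i hi r => h (Finsupp.single_mem_supported R r hi), fun h v hv => ?_⟩
  rw [← v.sum_single]
  exact Submodule.sum_mem p fun i hi => h i (hv hi) (v i)

theorem supported_le_supported_iff [Nontrivial M] {s t : Set ι} :
    Finsupp.supported M R s ≤ Finsupp.supported M R t ↔ s ⊆ t := by
  refine ⟨fun h i hi => ?_, Finsupp.supported_mono⟩
  obtain ⟨r, hr⟩ := exists_ne (0 : M)
  have hmem : Finsupp.single i r ∈ Finsupp.supported M R t :=
    supported_le_iff.mp h i hi r
  simpa [Finsupp.mem_supported, Finsupp.support_single i hr] using hmem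

end Supported

section ReducedLmapDomain

variable {α β γ : Type*} (M R : Type*) [Semiring R] [AddCommMonoid M] [Module R M]

open Classical in
/-- The map of reduced chain modules induced by a map `f` of pointed sets `(α, a) → (β, b)`: the
analogue of `Finsupp.lmapDomain` in which the basepoints are identified with zero. It depends only
on the values of `f` away from `a`, so `f a = b` is not built in. -/
noncomputable def reducedLmapDomain (a : α) (b : β) (f : α → β) :
    ({x // x ≠ a} →₀ M) →ₗ[R] ({y // y ≠ b} →₀ M) :=
  Finsupp.lsum ℕ fun x : {x // x ≠ a} =>
    if h : f x.1 ≠ b then Finsupp.lsingle ⟨f x.1, h⟩ else 0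

variable {M} {a : α} {b : β} {c : γ} {f : α → β} {g : β → γ}

theorem reducedLmapDomain_single_of_ne {x : {x // x ≠ a}} (h : f x ≠ b) (r : M) :
    reducedLmapDomain M R a b f (Finsupp.single x r) = Finsupp.single ⟨f x, h⟩ r := by
  simp [reducedLmapDomain, h]

theorem reducedLmapDomain_single_of_eq {x : {x // x ≠ a}} (h : f x = b) (r : M) :
    reducedLmapDomain M R a b f (Finsupp.single x r) = 0 := by
  simp [reducedLmapDomain, h]

theorem reducedLmapDomain_apply_map (hf : Set.InjOn f (f ⁻¹' {b}ᶜ)) {x : {x // x ≠ a}}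
    (h : f x ≠ b) (v : {x // x ≠ a} →₀ M) :
    reducedLmapDomain M R a b f v ⟨f x, h⟩ = v x := by
  classical
  suffices Finsupp.lapply ⟨f x, h⟩ ∘ₗ reducedLmapDomain M R a b f = Finsupp.lapply x from
    LinearMap.congr_fun this v
  refine Finsupp.lhom_ext fun y r => ?_
  simp only [LinearMap.comp_apply, Finsupp.lapply_apply]
  by_cases hy : f y = b
  · have hyx : y ≠ x := by rintro rfl; exact h hy
    rw [reducedLmapDomain_single_of_eq R hy, Finsupp.zero_apply,
      Finsupp.single_eq_of_ne hyx.symm]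
  · have hyx : (⟨f y, hy⟩ : {z // z ≠ b}) = ⟨f x, h⟩ ↔ y = x := by
      rw [Subtype.mk.injEq, hf.eq_iff hy h, Subtype.ext_iff]
    simp only [reducedLmapDomain_single_of_ne R hy, Finsupp.single_apply, hyx]

variable (M)

theorem ker_reducedLmapDomain (hf : Set.InjOn f (f ⁻¹' {b}ᶜ)) :
    LinearMap.ker (reducedLmapDomain M R a b f) = Finsupp.supported M R {x | f x.1 = b} := by
  apply le_antisymm
  · intro v hv
    rw [LinearMap.mem_ker] at hv
    refine (Finsupp.mem_supported' R v).mpr fun x hx => ?_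
    rw [← reducedLmapDomain_apply_map R hf hx v, hv, Finsupp.zero_apply]
  · exact supported_le_iff.mpr fun x hx r => reducedLmapDomain_single_of_eq R hx r

theorem range_reducedLmapDomain (hf : f a = b) :
    LinearMap.range (reducedLmapDomain M R a b f) =
      Finsupp.supported M R {y | y.1 ∈ Set.range f} := by
  apply le_antisymm
  · rw [LinearMap.range_le_iff_comap, eq_top_iff, ← Finsupp.supported_univ, supported_le_iff]
    intro x _ r
    rw [Submodule.mem_comap]
    by_cases h : f x = b
    · rw [reducedLmapDomain_single_of_eq R h]
      exact Submodule.zero_mem _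
    · rw [reducedLmapDomain_single_of_ne R h]
      exact Finsupp.single_mem_supported R r (Set.mem_range_self _)
  · refine supported_le_iff.mpr ?_
    rintro ⟨_, hx⟩ ⟨x, rfl⟩ r
    have hxa : x ≠ a := by rintro rfl; exact hx hf
    exact ⟨Finsupp.single ⟨x, hxa⟩ r, reducedLmapDomain_single_of_ne R hx r⟩

theorem ker_eq_range_reducedLmapDomain_iff [Nontrivial M] (hf : f a = b)
    (hg : Set.InjOn g (g ⁻¹' {c}ᶜ)) (hgf : ∀ x, g (f x) = c) :
    LinearMap.ker (reducedLmapDomain M R b c g) = LinearMap.range (reducedLmapDomain M R a b f) ↔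
      ∀ y, y ≠ b → g y = c → y ∈ Set.range f := by
  have range_subset_fiber : {y : {y // y ≠ b} | y.1 ∈ Set.range f} ⊆ {y | g y.1 = c} := by
    rintro ⟨_, _⟩ ⟨x, rfl⟩
    exact hgf x
  rw [ker_reducedLmapDomain M R hg, range_reducedLmapDomain M R hf,
    ← (Finsupp.supported_mono range_subset_fiber).ge_iff_eq', supported_le_supported_iff]
  exact Subtype.forall

end ReducedLmapDomain

namespace PreCC

variable {C : PreCC} {m n : ℤ}

-- The target index `n` is a variable equal to `m - 1`, so that `subst` eliminates the transport;
-- it could not for the instance `n + 1 - 1 = n`.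
theorem castM_comp_Dmap (R : Type) [Ring R] (h : m - 1 = n) :
    (castM C R h).toLinearMap ∘ₗ Dmap C R m =
      reducedLmapDomain R R (C.pt m) (C.pt n) (C.castX h ∘ C.d m) := by
  subst h
  rfl

theorem IsComplex.castX_d_pt (hC : C.IsComplex) (h : m - 1 = n) :
    C.castX h (C.d m (C.pt m)) = C.pt n := by
  subst h
  exact hC.1 m

theorem IsComplex.d_castX_d (hC : C.IsComplex) (h : m - 1 = n) (z : C.X m) :
    C.d n (C.castX h (C.d m z)) = C.pt (n - 1) := by
  subst h
  exact hC.2.2 m z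

theorem IsComplex.injOn_d (hC : C.IsComplex) (n : ℤ) :
    Set.InjOn (C.d n) (C.d n ⁻¹' {C.pt (n - 1)}ᶜ) :=
  fun x hx y _ hxy => hC.2.1 n x y hxy hx

theorem forall_Hmem_eq_pt_iff :
    (∀ x : C.X n, Hmem C n x → x = C.pt n) ↔
      ∀ x, x ≠ C.pt n → C.d n x = C.pt (n - 1) →
        x ∈ Set.range (C.castX (show n + 1 - 1 = n by omega) ∘ C.d (n + 1)) := by
  refine forall_congr' fun x => ?_
  simp only [Hmem, Set.mem_range, Function.comp_apply, ← not_exists]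
  tauto

theorem IsComplex.ker_Dmap_eq_range_iff (hC : C.IsComplex) (R : Type) [Ring R] [Nontrivial R]
    (n : ℤ) :
    LinearMap.ker (Dmap C R n) =
        LinearMap.range ((castM C R (show n + 1 - 1 = n by omega)).toLinearMap.comp
          (Dmap C R (n + 1))) ↔
      ∀ x : C.X n, Hmem C n x → x = C.pt n := by
  rw [castM_comp_Dmap, forall_Hmem_eq_pt_iff]
  exact ker_eq_range_reducedLmapDomain_iff R R (hC.castX_d_pt _) (hC.injOn_d n) (hC.d_castX_d _)

end PreCC

/-- For a nontrivial ring `R` and a chain complex of pointed sets `C`: for each `n`,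
`ker Dₙ = range Dₙ₊₁` if and only if `Hₙ(C) = {∗}`; in particular the complex of free
`R`-modules is exact if and only if the chain complex of pointed sets is exact. -/
theorem stmt3 (R : Type) [Ring R] [Nontrivial R] (C : PreCC) (hC : C.IsComplex) :
    (∀ n : ℤ,
      (LinearMap.ker (Dmap C R n) =
          LinearMap.range ((castM C R (show n + 1 - 1 = n by omega)).toLinearMap.comp
            (Dmap C R (n + 1))) ↔
        ∀ x : C.X n, Hmem C n x → x = C.pt n)) ∧
    ((∀ n : ℤ,
        LinearMap.ker (Dmap C R n) =
          LinearMap.range ((castM C R (show n + 1 - 1 = n by omega)).toLinearMap.comp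
            (Dmap C R (n + 1)))) ↔ C.Exact) := by
  have exact_at := hC.ker_Dmap_eq_range_iff R
  exact ⟨exact_at, forall_congr' exact_at⟩
end

section
/- (Weak Snake Lemma for pointed sets.) Let A →ⁱ B →ᵖ C and A' →ⁱ' B' →ᵖ' C' be short exact sequences of pointed sets: i and i' are injective pointed maps, p and p' are surjective pointed maps injective away from the basepoint, p⁻¹(∗) = i(A), and p'⁻¹(∗) = i'(A'). Let f : A → A', g : B → B', h : C → C' be pointed maps, each injective away from the basepoint, with g ∘ i = i' ∘ f and h ∘ p = p' ∘ g. Then: i restricts to a map ker f → ker g, p restricts to a map ker g → ker h, i' induces a map coker f → coker g (sending a' to i'(a') if i'(a') ∉ g(B), else to ∗), p' induces a map coker g → coker h (sending b' to p'(b') if p'(b') ∉ h(C), else to ∗), and there exists a pointed map δ : ker h → coker f such that all six maps are injective away from the basepoint and the six-term sequence ker f → ker g → ker h →^δ coker f → coker g → coker h is exact at ker g, ker h, coker f and coker g; moreover the first map ker f → ker g is injective and the last map coker g → coker h is surjective. -/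
/-!
The basepoint of a pointed set is written `0`, and `ZeroHom` is the type of pointed maps. The
connecting map is the relation `∃ b, c = p b ∧ g b = i' q` between `c ∈ ker h` and
`q ∈ coker f`. It is total: `g b = i' a'` for some `a'` by exactness, and if this is a nonzero point
`i' (f a) = g (i a)`, then `b = i a`, so that `c = 0`. It is single-valued: over `c ≠ 0` the element
`b` is unique because `p` is injective away from the basepoint, while over `c = 0` the element `g b`
lies in `i' (f A)`, which forces `q = 0`. Exactness at `ker h` is then the case `q = 0` of the
relation, and exactness at `coker f` is the projection of the relation to `q`.
-/

namespace PointedSet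

/-- Injectivity away from the basepoint: two points with the same image agree unless that image is
the basepoint. -/
def InjectiveAwayFromZero {A B : Type*} [Zero B] (f : A → B) : Prop :=
  ∀ ⦃x y⦄, f x = f y → f x ≠ 0 → x = y

variable {A B C A' B' C' : Type*} [Zero A] [Zero B] [Zero C] [Zero A'] [Zero B'] [Zero C']

/-- The kernel of a pointed map: the fibre over the basepoint, as a pointed set. -/
abbrev Ker (f : ZeroHom A B) : Type _ := {x : A // f x = 0}

/-- The cokernel of a pointed map: the complement of its range together with the basepoint. It is
realised as a subset of the codomain rather than as a quotient. -/
abbrev Coker (f : ZeroHom A B) : Type _ := {y : B // y = 0 ∨ y ∉ Set.range f}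

instance (f : ZeroHom A B) : Zero (Ker f) := ⟨0, map_zero f⟩

instance (f : ZeroHom A B) : Zero (Coker f) := ⟨0, Or.inl rfl⟩

theorem Coker.eq_zero_of_mem_range {f : ZeroHom A B} {y : Coker f} (hy : y.1 ∈ Set.range f) :
    y = 0 :=
  Subtype.ext (y.2.resolve_right (not_not_intro hy))

section Square

variable {f : ZeroHom A A'} {g : ZeroHom B B'} {u : ZeroHom A B} {u' : ZeroHom A' B'}

/-- The map `ker f → ker g` to which the top edge `u` of a commutative square from `f` to `g`
restricts. -/
def kerMap (comm : ∀ a, g (u a) = u' (f a)) : Ker f → Ker g :=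
  fun x => ⟨u x.1, by rw [comm, x.2, map_zero]⟩

theorem kerMap_injective (comm : ∀ a, g (u a) = u' (f a)) (hu : Function.Injective u) :
    Function.Injective (kerMap comm) :=
  fun _ _ hxy => Subtype.ext (hu (congrArg Subtype.val hxy))

theorem kerMap_injectiveAwayFromZero (comm : ∀ a, g (u a) = u' (f a))
    (hu : InjectiveAwayFromZero u) : InjectiveAwayFromZero (kerMap comm) :=
  fun _ _ hxy hx => Subtype.ext (hu (congrArg Subtype.val hxy) fun h => hx (Subtype.ext h))

theorem mem_range_kerMap_iff (comm : ∀ a, g (u a) = u' (f a)) (hu' : Function.Injective u')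
    {y : Ker g} : y ∈ Set.range (kerMap comm) ↔ y.1 ∈ Set.range u := by
  constructor
  · rintro ⟨x, rfl⟩
    exact ⟨x.1, rfl⟩
  · rintro ⟨a, ha⟩
    have hfa : f a = 0 := hu' (by rw [← comm, ha, y.2, map_zero])
    exact ⟨⟨a, hfa⟩, Subtype.ext ha⟩

open Classical in
/-- The map `coker f → coker g` induced by the bottom edge `u'` of a square from `f` to `g`: it
applies `u'` and collapses the range of `g` to the basepoint. -/
noncomputable def cokerMap (f : ZeroHom A A') (g : ZeroHom B B') (u' : ZeroHom A' B') :
    Coker f → Coker g :=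
  fun x => if hx : u' x.1 ∈ Set.range g then ⟨0, Or.inl rfl⟩ else ⟨u' x.1, Or.inr hx⟩

theorem coe_cokerMap_of_notMem_range {x : Coker f} (hx : u' x.1 ∉ Set.range g) :
    (cokerMap f g u' x).1 = u' x.1 := by
  rw [cokerMap, dif_neg hx]

theorem cokerMap_eq_zero_iff {x : Coker f} : cokerMap f g u' x = 0 ↔ u' x.1 ∈ Set.range g := by
  refine ⟨fun h => ?_, fun hx => dif_pos hx⟩
  by_contra hx
  have hzero : u' x.1 = 0 := by rw [← coe_cokerMap_of_notMem_range hx, h]; rfl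
  exact hx ⟨0, by rw [hzero, map_zero]⟩

theorem cokerMap_injectiveAwayFromZero (hu' : InjectiveAwayFromZero u') :
    InjectiveAwayFromZero (cokerMap f g u') := by
  intro x y hxy hx
  have hux : u' x.1 ∉ Set.range g := mt cokerMap_eq_zero_iff.2 hx
  have huy : u' y.1 ∉ Set.range g := mt cokerMap_eq_zero_iff.2 (hxy ▸ hx)
  have hu_eq : u' x.1 = u' y.1 := by
    rw [← coe_cokerMap_of_notMem_range hux, ← coe_cokerMap_of_notMem_range huy, hxy]
  exact Subtype.ext (hu' hu_eq fun hzero => hux ⟨0, by rw [hzero, map_zero]⟩)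

theorem mem_range_cokerMap_iff (comm : ∀ a, g (u a) = u' (f a)) {y : Coker g} :
    y ∈ Set.range (cokerMap f g u') ↔ y.1 ∈ Set.range u' := by
  constructor
  · rintro ⟨x, rfl⟩
    by_cases hx : u' x.1 ∈ Set.range g
    · exact ⟨0, by rw [cokerMap_eq_zero_iff.2 hx, map_zero]; rfl⟩
    · exact ⟨x.1, (coe_cokerMap_of_notMem_range hx).symm⟩
  · rintro ⟨a', ha'⟩
    by_cases hy : y.1 ∈ Set.range g
    · refine ⟨0, ?_⟩
      rw [Coker.eq_zero_of_mem_range hy, cokerMap_eq_zero_iff]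
      exact ⟨0, by rw [map_zero]; exact (map_zero u').symm⟩
    · have ha'_notMem : a' ∉ Set.range f := by
        rintro ⟨a, rfl⟩
        exact hy ⟨u a, by rw [comm, ha']⟩
      refine ⟨⟨a', Or.inr ha'_notMem⟩, Subtype.ext ?_⟩
      rw [coe_cokerMap_of_notMem_range (by rwa [ha']), ha']

theorem cokerMap_surjective (comm : ∀ a, g (u a) = u' (f a)) (hu' : Function.Surjective u') :
    Function.Surjective (cokerMap f g u') :=
  fun y => (mem_range_cokerMap_iff comm).2 (hu' y.1)

end Square

section Ladder

variable {i : ZeroHom A B} {p : ZeroHom B C} {i' : ZeroHom A' B'} {p' : ZeroHom B' C'}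
  {f : ZeroHom A A'} {g : ZeroHom B B'} {h : ZeroHom C C'}

theorem exact_kerMap (comm : ∀ a, g (i a) = i' (f a)) (comm' : ∀ b, h (p b) = p' (g b))
    (exact : Function.Exact i p) (hi' : Function.Injective i') :
    Function.Exact (kerMap comm) (kerMap comm') := fun y => by
  rw [mem_range_kerMap_iff comm hi', ← exact]
  exact Subtype.ext_iff

theorem Coker.map_mem_range_iff_eq_zero (comm' : ∀ b, h (p b) = p' (g b))
    (hp : Function.Surjective p) (hp' : InjectiveAwayFromZero p') {y : Coker g} :
    p' y.1 ∈ Set.range h ↔ p' y.1 = 0 := by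
  refine ⟨?_, fun hy => ⟨0, by rw [hy, map_zero]⟩⟩
  rintro ⟨c, hc⟩
  by_contra hne
  obtain ⟨b, rfl⟩ := hp c
  have hyb : y.1 = g b := hp' (by rw [← hc, comm']) hne
  have hy_zero : y = 0 := Coker.eq_zero_of_mem_range ⟨b, hyb.symm⟩
  exact hne (by rw [hy_zero]; exact map_zero p')

theorem exact_cokerMap (comm : ∀ a, g (i a) = i' (f a)) (comm' : ∀ b, h (p b) = p' (g b))
    (hp : Function.Surjective p) (hp' : InjectiveAwayFromZero p') (exact' : Function.Exact i' p') :
    Function.Exact (cokerMap f g i') (cokerMap g h p') := fun y => by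
  rw [cokerMap_eq_zero_iff, Coker.map_mem_range_iff_eq_zero comm' hp hp', exact',
    mem_range_cokerMap_iff comm]

/-- `δ : ker h → coker f` is a connecting map of the ladder when its graph is the snake relation
`i'⁻¹ ∘ g ∘ p⁻¹`. -/
def IsConnecting (p : ZeroHom B C) (g : ZeroHom B B') (i' : ZeroHom A' B')
    (δ : Ker h → Coker f) : Prop :=
  ∀ c q, δ c = q ↔ ∃ b, p b = c.1 ∧ g b = i' q.1

theorem exists_snake (comm : ∀ a, g (i a) = i' (f a)) (comm' : ∀ b, h (p b) = p' (g b))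
    (hp : Function.Surjective p) (exact : Function.Exact i p) (exact' : Function.Exact i' p')
    (hg : InjectiveAwayFromZero g) (c : Ker h) :
    ∃ (q : Coker f) (b : B), p b = c.1 ∧ g b = i' q.1 := by
  obtain ⟨b, hb⟩ := hp c.1
  obtain ⟨a', ha'⟩ := (exact' (g b)).1 (by rw [← comm', hb, c.2])
  by_cases ha'_mem : a' ∈ Set.range f
  · obtain ⟨a, rfl⟩ := ha'_mem
    by_cases hgb : g b = 0
    · exact ⟨0, b, hb, hgb.trans (map_zero i').symm⟩
    · have hb_eq : b = i a := hg (by rw [comm, ha']) hgb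
      have hc : c.1 = 0 := by rw [← hb, hb_eq, exact.apply_apply_eq_zero]
      exact ⟨0, 0, by rw [hc, map_zero], (map_zero g).trans (map_zero i').symm⟩
  · exact ⟨⟨a', Or.inr ha'_mem⟩, b, hb, ha'.symm⟩

theorem snake_unique (comm : ∀ a, g (i a) = i' (f a)) (hp : InjectiveAwayFromZero p)
    (exact : Function.Exact i p) (hi' : Function.Injective i') {q r : Coker f} {b d : B}
    (hbd : p b = p d) (hb : g b = i' q.1) (hd : g d = i' r.1) : q = r := by
  by_cases hpb : p b = 0
  · have eq_zero {s : Coker f} {e : B} (hpe : p e = 0) (he : g e = i' s.1) : s = 0 := by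
      obtain ⟨a, rfl⟩ := (exact e).1 hpe
      exact Coker.eq_zero_of_mem_range ⟨a, hi' (by rw [← comm, he])⟩
    rw [eq_zero hpb hb, eq_zero (hbd ▸ hpb) hd]
  · obtain rfl := hp hbd hpb
    exact Subtype.ext (hi' (by rw [← hb, hd]))

theorem exists_isConnecting (comm : ∀ a, g (i a) = i' (f a)) (comm' : ∀ b, h (p b) = p' (g b))
    (hp : Function.Surjective p) (hp_inj : InjectiveAwayFromZero p) (exact : Function.Exact i p)
    (exact' : Function.Exact i' p') (hi' : Function.Injective i')
    (hg : InjectiveAwayFromZero g) : ∃ δ : Ker h → Coker f, IsConnecting p g i' δ := by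
  choose δ b hb hgb using exists_snake (f := f) comm comm' hp exact exact' hg
  refine ⟨δ, fun c q => ⟨?_, ?_⟩⟩
  · rintro rfl
    exact ⟨b c, hb c, hgb c⟩
  · rintro ⟨d, hd, hgd⟩
    exact snake_unique comm hp_inj exact hi' ((hb c).trans hd.symm) (hgb c) hgd

namespace IsConnecting

variable {δ : Ker h → Coker f}

theorem apply_zero (hδ : IsConnecting p g i' δ) : δ 0 = 0 :=
  (hδ 0 0).2 ⟨0, map_zero p, (map_zero g).trans (map_zero i').symm⟩

theorem injectiveAwayFromZero (hδ : IsConnecting p g i' δ) (hi' : Function.Injective i')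
    (hg : InjectiveAwayFromZero g) : InjectiveAwayFromZero δ := by
  intro x y hxy hx
  obtain ⟨b, hb, hgb⟩ := (hδ x (δ x)).1 rfl
  obtain ⟨d, hd, hgd⟩ := (hδ y (δ x)).1 hxy.symm
  have hgb_ne : g b ≠ 0 := fun hzero =>
    hx (Subtype.ext (hi' (by rw [← hgb, hzero]; exact (map_zero i').symm)))
  have hbd : b = d := hg (hgb.trans hgd.symm) hgb_ne
  exact Subtype.ext (by rw [← hb, ← hd, hbd])

theorem exact_kerMap (hδ : IsConnecting p g i' δ) (comm' : ∀ b, h (p b) = p' (g b)) :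
    Function.Exact (kerMap comm') δ := fun c => by
  rw [hδ]
  constructor
  · rintro ⟨b, hb, hgb⟩
    exact ⟨⟨b, hgb.trans (map_zero i')⟩, Subtype.ext hb⟩
  · rintro ⟨b, rfl⟩
    exact ⟨b.1, rfl, b.2.trans (map_zero i').symm⟩

theorem exact_cokerMap (hδ : IsConnecting p g i' δ) (comm' : ∀ b, h (p b) = p' (g b))
    (exact' : Function.Exact i' p') : Function.Exact δ (cokerMap f g i') := fun q => by
  rw [cokerMap_eq_zero_iff]
  constructor
  · rintro ⟨b, hb⟩
    have hpb : h (p b) = 0 := by rw [comm', hb, exact'.apply_apply_eq_zero]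
    exact ⟨⟨p b, hpb⟩, (hδ _ _).2 ⟨b, rfl, hb⟩⟩
  · rintro ⟨c, hc⟩
    obtain ⟨b, -, hb⟩ := (hδ c q).1 hc
    exact ⟨b, hb⟩

end IsConnecting

end Ladder

end PointedSet

open PointedSet in
open Classical in
/-- **Weak Snake Lemma for pointed sets.** Pointed sets are modeled as types with a
chosen basepoint. Given a morphism `(f, g, h)` of short exact sequences of pointed sets
`A →ⁱ B →ᵖ C` and `A' →ⁱ' B' →ᵖ' C'` (with `i, i'` injective pointed maps, `p, p'`
surjective pointed maps injective away from the basepoint, and `p⁻¹(∗) = i(A)`,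
`p'⁻¹(∗) = i'(A')`), where `f, g, h` are pointed maps injective away from the basepoint,
there is a six-term exact sequence
`ker f → ker g → ker h → coker f → coker g → coker h` whose maps are all injective away
from the basepoint; moreover the first map is injective and the last map is surjective. -/
theorem stmt4 {A B C A' B' C' : Type}
    (a0 : A) (b0 : B) (c0 : C) (a0' : A') (b0' : B') (c0' : C')
    (i : A → B) (p : B → C) (i' : A' → B') (p' : B' → C')
    (f : A → A') (g : B → B') (h : C → C')
    (hi0 : i a0 = b0) (hp0 : p b0 = c0) (hi0' : i' a0' = b0') (hp0' : p' b0' = c0')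
    (hf0 : f a0 = a0') (hg0 : g b0 = b0') (hh0 : h c0 = c0')
    (hi_inj : Function.Injective i)
    (hp_surj : Function.Surjective p)
    (hp_inj : ∀ x y : B, p x = p y → p x ≠ c0 → x = y)
    (hex : ∀ b : B, p b = c0 ↔ b ∈ Set.range i)
    (hi'_inj : Function.Injective i')
    (hp'_surj : Function.Surjective p')
    (hp'_inj : ∀ x y : B', p' x = p' y → p' x ≠ c0' → x = y)
    (hex' : ∀ b : B', p' b = c0' ↔ b ∈ Set.range i')
    (hf_inj : ∀ x y : A, f x = f y → f x ≠ a0' → x = y)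
    (hg_inj : ∀ x y : B, g x = g y → g x ≠ b0' → x = y)
    (hh_inj : ∀ x y : C, h x = h y → h x ≠ c0' → x = y)
    (hsq1 : ∀ a : A, g (i a) = i' (f a))
    (hsq2 : ∀ b : B, h (p b) = p' (g b)) :
    -- kernels and cokernels, as pointed sets
    let Kf : Type := {x : A // f x = a0'}
    let Kg : Type := {x : B // g x = b0'}
    let Kh : Type := {x : C // h x = c0'}
    let Qf : Type := {x : A' // x = a0' ∨ x ∉ Set.range f}
    let Qg : Type := {x : B' // x = b0' ∨ x ∉ Set.range g}
    let Qh : Type := {x : C' // x = c0' ∨ x ∉ Set.range h}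
    -- the restriction of i to kernels
    let α : Kf → Kg := fun x => ⟨i x.1, by rw [hsq1, x.2, hi0']⟩
    -- the restriction of p to kernels
    let β : Kg → Kh := fun x => ⟨p x.1, by rw [hsq2, x.2, hp0']⟩
    -- the map induced by i' on cokernels
    let γ : Qf → Qg := fun x =>
      if hx : i' x.1 ∈ Set.range g then ⟨b0', Or.inl rfl⟩ else ⟨i' x.1, Or.inr hx⟩
    -- the map induced by p' on cokernels
    let ε : Qg → Qh := fun x =>
      if hx : p' x.1 ∈ Set.range h then ⟨c0', Or.inl rfl⟩ else ⟨p' x.1, Or.inr hx⟩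
    ∃ δ : Kh → Qf,
      -- δ is pointed
      δ ⟨c0, hh0⟩ = ⟨a0', Or.inl rfl⟩ ∧
      -- all maps in the sequence are injective away from the basepoint
      (∀ x y : Kf, α x = α y → α x ≠ (⟨b0, hg0⟩ : Kg) → x = y) ∧
      (∀ x y : Kg, β x = β y → β x ≠ (⟨c0, hh0⟩ : Kh) → x = y) ∧
      (∀ x y : Kh, δ x = δ y → δ x ≠ (⟨a0', Or.inl rfl⟩ : Qf) → x = y) ∧
      (∀ x y : Qf, γ x = γ y → γ x ≠ (⟨b0', Or.inl rfl⟩ : Qg) → x = y) ∧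
      (∀ x y : Qg, ε x = ε y → ε x ≠ (⟨c0', Or.inl rfl⟩ : Qh) → x = y) ∧
      -- exactness at ker g, ker h, coker f, coker g
      (∀ t : Kg, β t = (⟨c0, hh0⟩ : Kh) ↔ t ∈ Set.range α) ∧
      (∀ t : Kh, δ t = (⟨a0', Or.inl rfl⟩ : Qf) ↔ t ∈ Set.range β) ∧
      (∀ t : Qf, γ t = (⟨b0', Or.inl rfl⟩ : Qg) ↔ t ∈ Set.range δ) ∧
      (∀ t : Qg, ε t = (⟨c0', Or.inl rfl⟩ : Qh) ↔ t ∈ Set.range γ) ∧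
      -- the first map is injective and the last map is surjective
      Function.Injective α ∧ Function.Surjective ε := by
  intro Kf Kg Kh Qf Qg Qh α β γ ε
  let : Zero A := ⟨a0⟩
  let : Zero B := ⟨b0⟩
  let : Zero C := ⟨c0⟩
  let : Zero A' := ⟨a0'⟩
  let : Zero B' := ⟨b0'⟩
  let : Zero C' := ⟨c0'⟩
  let i₀ : ZeroHom A B := ⟨i, hi0⟩
  let p₀ : ZeroHom B C := ⟨p, hp0⟩
  let i₀' : ZeroHom A' B' := ⟨i', hi0'⟩
  let p₀' : ZeroHom B' C' := ⟨p', hp0'⟩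
  let f₀ : ZeroHom A A' := ⟨f, hf0⟩
  let g₀ : ZeroHom B B' := ⟨g, hg0⟩
  let h₀ : ZeroHom C C' := ⟨h, hh0⟩
  have comm : ∀ a, g₀ (i₀ a) = i₀' (f₀ a) := hsq1
  have comm' : ∀ b, h₀ (p₀ b) = p₀' (g₀ b) := hsq2
  have hα : Function.Injective α := kerMap_injective comm hi_inj
  obtain ⟨δ, hδ⟩ := exists_isConnecting comm comm' hp_surj hp_inj hex hex' hi'_inj hg_inj
  exact ⟨δ, hδ.apply_zero, fun _ _ hxy _ => hα hxy,
    kerMap_injectiveAwayFromZero comm' hp_inj, hδ.injectiveAwayFromZero hi'_inj hg_inj,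
    cokerMap_injectiveAwayFromZero (f := f₀) (g := g₀) (u' := i₀') fun _ _ hxy _ => hi'_inj hxy,
    cokerMap_injectiveAwayFromZero (f := g₀) (g := h₀) (u' := p₀') hp'_inj,
    exact_kerMap comm comm' hex hi'_inj, hδ.exact_kerMap comm', hδ.exact_cokerMap comm' hex',
    exact_cokerMap comm comm' hp_surj hp'_inj hex', hα, cokerMap_surjective comm' hp'_surj⟩
end

section
/- (Explicit set-theoretic form of the weak snake lemma.) Let B and B' be sets, A ⊆ B with complement C = B \ A, A' ⊆ B' with complement C' = B' \ A', Y ⊆ B, and j : Y → B' an injective function. Define X = Y ∩ A, Z = {y ∈ Y : j(y) ∈ C'}, and W = (C ∩ Y) \ Z, and assume Z ⊆ C. Then: (i) B \ Y is the disjoint union of A \ X and C \ Y; (ii) C \ Z is the disjoint union of C \ Y and W; (iii) j restricts to an injection on W with image (A' ∩ j(Y)) \ j(X), and A' \ j(X) is the disjoint union of j(W) and A' \ j(Y); (iv) B' \ j(Y) is the disjoint union of A' \ j(Y) and C' \ j(Z). In other words, the six-term sequence A \ X → B \ Y → C \ Z → A' \ j(X) → B' \ j(Y) → C' \ j(Z)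 is an exact sequence of sets, with transition sets A \ X, C \ Y, W, A' \ j(Y), C' \ j(Z). -/
/-!
For `V ⊆ U`, cutting `S \ V` along `U` leaves the pieces `S \ U` and `(S ∩ U) \ V`, and cutting
`Uᶜ` along `S` leaves `S \ U` and `Sᶜ \ U`. All four decompositions of the snake lemma are of these
two kinds, once the images under `j` are computed: `j(Z) = C' ∩ j(Y)`, while `W = (Y \ X) \ Z` and
injectivity give `j(W) = (j(Y) \ j(X)) \ C'`.
-/

open Set

section DisjointUnion

variable {α : Type*} {S T U V : Set α}

/-- The set `S` is the internal disjoint union of its subsets `T` and `U`; exactness of a sequence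
of sets at `S` means this for the two transition subsets. -/
def IsDisjointUnion (S T U : Set α) : Prop :=
  S = T ∪ U ∧ Disjoint T U

theorem IsDisjointUnion.symm (h : IsDisjointUnion S T U) : IsDisjointUnion S U T :=
  ⟨h.1.trans (union_comm T U), h.2.symm⟩

theorem isDisjointUnion_compl (S U : Set α) : IsDisjointUnion Uᶜ (S \ U) (Sᶜ \ U) := by
  refine ⟨?_, disjoint_compl_right.mono sdiff_subset sdiff_subset⟩
  rw [← union_sdiff_distrib, union_compl_self, compl_eq_univ_sdiff]

theorem isDisjointUnion_sdiff_of_subset (S : Set α) (hVU : V ⊆ U) :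
    IsDisjointUnion (S \ V) (S \ U) ((S ∩ U) \ V) := by
  have disjoint_pieces : Disjoint (S \ U) (S ∩ U) := disjoint_sdiff_inter
  refine ⟨?_, disjoint_pieces.mono_right sdiff_subset⟩
  calc S \ V = (S \ U ∪ S ∩ U) \ V := by rw [sdiff_union_inter]
    _ = S \ U ∪ (S ∩ U) \ V := by
      rw [union_sdiff_distrib, sdiff_sdiff, union_eq_self_of_subset_right hVU]

end DisjointUnion

section PartialMap

variable {B B' : Type*} {Y : Set B}

/-- The preimage of `T ⊆ B'` under a map `j` defined only on `Y ⊆ B`, as a subset of `B`. -/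
def partialPreimage (j : Y → B') (T : Set B') : Set B :=
  {b | ∃ h : b ∈ Y, j ⟨b, h⟩ ∈ T}

/-- The image of `S ⊆ B` under a map `j` defined only on `Y ⊆ B`; points of `S` outside `Y` do not
contribute. -/
def partialImage (j : Y → B') (S : Set B) : Set B' :=
  j '' (Subtype.val ⁻¹' S)

theorem partialPreimage_subset (j : Y → B') (T : Set B') : partialPreimage j T ⊆ Y :=
  fun _ hb => hb.1

theorem val_preimage_partialPreimage (j : Y → B') (T : Set B') :
    Subtype.val ⁻¹' partialPreimage j T = j ⁻¹' T :=
  ext fun y => exists_prop_of_true y.2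

theorem partialImage_mono (j : Y → B') {S T : Set B} (hST : S ⊆ T) :
    partialImage j S ⊆ partialImage j T :=
  image_mono (preimage_mono hST)

theorem partialImage_domain (j : Y → B') : partialImage j Y = range j := by
  rw [partialImage, Subtype.coe_preimage_self, image_univ]

theorem partialImage_partialPreimage (j : Y → B') (T : Set B') :
    partialImage j (partialPreimage j T) = T ∩ partialImage j Y := by
  rw [partialImage_domain, partialImage, val_preimage_partialPreimage,
    image_preimage_eq_inter_range]

theorem partialImage_sdiff_partialPreimage (j : Y → B') (S : Set B) (T : Set B') :
    partialImage j (S \ partialPreimage j T) = partialImage j S \ T := by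
  rw [partialImage, preimage_sdiff, val_preimage_partialPreimage, image_sdiff_preimage,
    partialImage]

theorem partialImage_sdiff {j : Y → B'} (hj : Function.Injective j) (S T : Set B) :
    partialImage j (S \ T) = partialImage j S \ partialImage j T :=
  image_sdiff hj _ _

theorem partialImage_compl_inter_sdiff_partialPreimage_compl {j : Y → B'}
    (hj : Function.Injective j) (A : Set B) (A' : Set B') :
    partialImage j ((Aᶜ ∩ Y) \ partialPreimage j A'ᶜ) =
      (A' ∩ partialImage j Y) \ partialImage j (Y ∩ A) := by
  have compl_inter_eq : Aᶜ ∩ Y = Y \ (Y ∩ A) := by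
    rw [sdiff_self_inter, sdiff_eq, inter_comm]
  calc partialImage j ((Aᶜ ∩ Y) \ partialPreimage j A'ᶜ)
      = (partialImage j Y \ partialImage j (Y ∩ A)) \ A'ᶜ := by
        rw [partialImage_sdiff_partialPreimage, compl_inter_eq, partialImage_sdiff hj]
    _ = (A' ∩ partialImage j Y) \ partialImage j (Y ∩ A) := by
        rw [sdiff_compl, inter_comm, inter_sdiff_assoc]

end PartialMap

theorem stmt6_general {B B' : Type*} (A : Set B) (A' : Set B') (Y : Set B)
    (j : Y → B') (hj : Function.Injective j) :
    let C : Set B := Aᶜ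
    let C' : Set B' := A'ᶜ
    let X : Set B := Y ∩ A
    let Z : Set B := partialPreimage j C'
    let W : Set B := (C ∩ Y) \ Z
    IsDisjointUnion Yᶜ (A \ X) (C \ Y) ∧
    IsDisjointUnion (C \ Z) (C \ Y) W ∧
    ((∀ y₁ y₂ : Y, ↑y₁ ∈ W → ↑y₂ ∈ W → j y₁ = j y₂ → y₁ = y₂) ∧
      partialImage j W = (A' ∩ partialImage j Y) \ partialImage j X ∧
      IsDisjointUnion (A' \ partialImage j X) (partialImage j W) (A' \ partialImage j Y)) ∧
    IsDisjointUnion (partialImage j Y)ᶜ (A' \ partialImage j Y) (C' \ partialImage j Z) := by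
  intro C C' X Z W
  have sdiff_X : A \ X = A \ Y := sdiff_inter_self_eq_sdiff
  have image_W : partialImage j W = (A' ∩ partialImage j Y) \ partialImage j X :=
    partialImage_compl_inter_sdiff_partialPreimage_compl hj A A'
  have image_X_subset : partialImage j X ⊆ partialImage j Y := partialImage_mono j inter_subset_left
  have sdiff_image_Z : C' \ partialImage j Z = C' \ partialImage j Y := by
    rw [partialImage_partialPreimage, sdiff_self_inter]
  refine ⟨?_, ?_, ⟨fun _ _ _ _ h => hj h, image_W, ?_⟩, ?_⟩
  · rw [sdiff_X]
    exact isDisjointUnion_compl A Y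
  · exact isDisjointUnion_sdiff_of_subset C (partialPreimage_subset j C')
  · rw [image_W]
    exact (isDisjointUnion_sdiff_of_subset A' image_X_subset).symm
  · rw [sdiff_image_Z]
    exact isDisjointUnion_compl A' (partialImage j Y)

/-- **Explicit set-theoretic form of the weak snake lemma.** Given `A ⊆ B` with
complement `C = B \ A`, `A' ⊆ B'` with complement `C' = B' \ A'`, a subset `Y ⊆ B` and an
injection `j : Y → B'`, set `X = Y ∩ A`, `Z = {y ∈ Y : j y ∈ C'}` and `W = (C ∩ Y) \ Z`,
and assume `Z ⊆ C`. Then: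
(i) `B \ Y` is the disjoint union of `A \ X` and `C \ Y`;
(ii) `C \ Z` is the disjoint union of `C \ Y` and `W`;
(iii) `j` restricts to an injection on `W` with image `(A' ∩ j(Y)) \ j(X)`, and
`A' \ j(X)` is the disjoint union of `j(W)` and `A' \ j(Y)`;
(iv) `B' \ j(Y)` is the disjoint union of `A' \ j(Y)` and `C' \ j(Z)`.
That is, `A \ X → B \ Y → C \ Z → A' \ j(X) → B' \ j(Y) → C' \ j(Z)` is an exact
sequence of sets with transition sets `A \ X, C \ Y, W, A' \ j(Y), C' \ j(Z)`. -/
theorem stmt6 {B B' : Type} (A : Set B) (A' : Set B') (Y : Set B)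
    (j : Y → B') (hj : Function.Injective j) :
    let C : Set B := Aᶜ
    let C' : Set B' := A'ᶜ
    let X : Set B := Y ∩ A
    let Z : Set B := {b | ∃ h : b ∈ Y, j ⟨b, h⟩ ∈ C'}
    let W : Set B := (C ∩ Y) \ Z
    -- the image under `j` of a subset of `B`
    let jim : Set B → Set B' := fun S => {b' | ∃ y : Y, ↑y ∈ S ∧ j y = b'}
    Z ⊆ C →
    -- (i)
    ((Yᶜ = (A \ X) ∪ (C \ Y) ∧ Disjoint (A \ X) (C \ Y)) ∧
    -- (ii)
    (C \ Z = (C \ Y) ∪ W ∧ Disjoint (C \ Y) W) ∧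
    -- (iii)
    ((∀ y₁ y₂ : Y, ↑y₁ ∈ W → ↑y₂ ∈ W → j y₁ = j y₂ → y₁ = y₂) ∧
      jim W = (A' ∩ jim Y) \ jim X ∧
      (A' \ jim X = jim W ∪ (A' \ jim Y) ∧ Disjoint (jim W) (A' \ jim Y))) ∧
    -- (iv)
    ((jim Y)ᶜ = (A' \ jim Y) ∪ (C' \ jim Z) ∧
      Disjoint (A' \ jim Y) (C' \ jim Z))) :=
  fun _ => stmt6_general A A' Y j hj
end

section
/- (Long exact sequence in homology.) Let X, Y, Z be chain complexes of pointed sets, f : X → Y a chain map with each fₙ injective, and g : Y → Z a chain map with each gₙ surjective and injective away from the basepoint, such that gₙ⁻¹(∗) = fₙ(Xₙ) for all n (a short exact sequence of chain complexes). Then there exist pointed maps δₙ : Hₙ(Z) → Hₙ₋₁(X), injective away from the basepoint, such that the sequence ⋯ → Hₙ₊₁(Z) →^{δₙ₊₁} Hₙ(X) →^{Hₙ(f)} Hₙ(Y) →^{Hₙ(g)} Hₙ(Z) →^{δₙ} Hₙ₋₁(X) → ⋯ is exact at every term, where Hₙ(f) and Hₙ(g) are the induced maps on homology. -/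
/-! A map that is injective away from the basepoint has unique lifts of non-basepoints, so a class
`z ≠ ∗` in `Hₙ₊₁(Z)` has exactly one lift `y` along `g`, and `∂ y` comes from a unique `x`; this is
the connecting map. The relation `∃ y, g y = z ∧ ∂ y = f x` stays functional at `z = ∗`, although
lifts of `∗` are not unique: there `y = f w`, so the homology element `x = ∂ w` is a boundary and
must be `∗`. Hence `δ z = x` is equivalent to this relation, and every property of `δ` is a property
of the relation. -/

namespace PreCC

variable {C D : PreCC} {m n : ℤ}

theorem castX_inj (h : m = n) {a b : C.X m} : C.castX h a = C.castX h b ↔ a = b := by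
  subst h; rfl

theorem castX_pt (h : m = n) : C.castX h (C.pt m) = C.pt n := by
  subst h; rfl

theorem map_castX (f : ∀ n, C.X n → D.X n) (h : m = n) (a : C.X m) :
    f n (C.castX h a) = D.castX h (f m a) := by
  subst h; rfl

theorem d_castX (h : m = n) (a : C.X m) :
    C.d n (C.castX h a) = C.castX (congrArg (· - 1) h) (C.d m a) := by
  subst h; rfl

/-- The differential `∂ : Xₙ₊₁ → Xₙ`, i.e. `dₙ₊₁` with its codomain `X (n + 1 - 1)` transported to
`X n`. Its range is the set of boundaries occurring in `Hmem`. -/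
def bd (C : PreCC) (n : ℤ) (y : C.X (n + 1)) : C.X n :=
  C.castX (show n + 1 - 1 = n by omega) (C.d (n + 1) y)

theorem bd_eq_pt_iff {y : C.X (n + 1)} : C.bd n y = C.pt n ↔ C.d (n + 1) y = C.pt (n + 1 - 1) := by
  rw [bd, ← castX_pt (show n + 1 - 1 = n by omega), castX_inj]

namespace IsComplex

theorem d_pt (hC : C.IsComplex) (n : ℤ) : C.d n (C.pt n) = C.pt (n - 1) :=
  hC.1 n

theorem bd_pt (hC : C.IsComplex) (n : ℤ) : C.bd n (C.pt (n + 1)) = C.pt n :=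
  bd_eq_pt_iff.2 (hC.d_pt _)

theorem d_bd (hC : C.IsComplex) (y : C.X (n + 1)) : C.d n (C.bd n y) = C.pt (n - 1) := by
  rw [bd, d_castX, hC.2.2, castX_pt]

theorem eq_of_bd_eq (hC : C.IsComplex) {a b : C.X (n + 1)} (hab : C.bd n a = C.bd n b)
    (ha : C.bd n a ≠ C.pt n) : a = b :=
  hC.2.1 _ a b ((castX_inj _).1 hab) fun h => ha (bd_eq_pt_iff.2 h)

theorem hmem_iff (hC : C.IsComplex) {x : C.X n} :
    Hmem C n x ↔ C.d n x = C.pt (n - 1) ∧ (x ∈ Set.range (C.bd n) → x = C.pt n) := by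
  constructor
  · rintro (rfl | ⟨-, hcycle, hbd⟩)
    · exact ⟨hC.d_pt n, fun _ => rfl⟩
    · exact ⟨hcycle, fun ⟨y, hy⟩ => absurd hy (hbd y)⟩
  · rintro ⟨hcycle, hbd⟩
    by_cases hx : x = C.pt n
    · exact Or.inl hx
    · exact Or.inr ⟨hx, hcycle, fun y hy => hx (hbd ⟨y, hy⟩)⟩

theorem d_val (hC : C.IsComplex) (t : HT C n) : C.d n t.1 = C.pt (n - 1) :=
  (hC.hmem_iff.1 t.2).1

theorem eq_hpt_of_val_mem_range_bd (hC : C.IsComplex) {t : HT C n}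
    (ht : t.1 ∈ Set.range (C.bd n)) : t = Hpt C n :=
  Subtype.ext ((hC.hmem_iff.1 t.2).2 ht)

end IsComplex

end PreCC

section InducedMap

variable {C D : PreCC} {f : ∀ n, C.X n → D.X n} {n : ℤ}

theorem hmap_eq_of_map_val_eq {t : HT C n} {s : HT D n} (h : f n t.1 = s.1) :
    Hmap C D f n t = s :=
  (dif_pos (h ▸ s.2 : Hmem D n (f n t.1))).trans (Subtype.ext h)

theorem map_val_eq_of_hmap_ne_hpt {t : HT C n} (h : Hmap C D f n t ≠ Hpt D n) :
    f n t.1 = (Hmap C D f n t).1 := by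
  have hmem : Hmem D n (f n t.1) := by
    by_contra hnot
    exact h (dif_neg hnot)
  exact (congrArg Subtype.val (hmap_eq_of_map_val_eq (s := ⟨f n t.1, hmem⟩) rfl)).symm

namespace IsChainMap

theorem map_pt (hf : IsChainMap C D f) (n : ℤ) : f n (C.pt n) = D.pt n :=
  hf.1 n

theorem eq_of_map_eq (hf : IsChainMap C D f) {a b : C.X n} (hab : f n a = f n b)
    (ha : f n a ≠ D.pt n) : a = b :=
  hf.2.1 n a b hab ha

theorem map_d (hf : IsChainMap C D f) (x : C.X n) : f (n - 1) (C.d n x) = D.d n (f n x) :=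
  hf.2.2 n x

theorem map_bd (hf : IsChainMap C D f) (x : C.X (n + 1)) :
    f n (C.bd n x) = D.bd n (f (n + 1) x) := by
  rw [PreCC.bd, PreCC.map_castX f, hf.map_d, PreCC.bd]

theorem map_eq_pt_iff (hf : IsChainMap C D f) (hinj : Function.Injective (f n)) {x : C.X n} :
    f n x = D.pt n ↔ x = C.pt n := by
  rw [← hf.map_pt, hinj.eq_iff]

theorem hmap_hpt (hf : IsChainMap C D f) (n : ℤ) : Hmap C D f n (Hpt C n) = Hpt D n :=
  hmap_eq_of_map_val_eq (hf.map_pt n)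

theorem hmap_eq_hpt_iff (hf : IsChainMap C D f) (hC : C.IsComplex) (hD : D.IsComplex)
    {t : HT C n} : Hmap C D f n t = Hpt D n ↔ f n t.1 ∈ Set.range (D.bd n) := by
  have hcycle : D.d n (f n t.1) = D.pt (n - 1) := by rw [← hf.map_d, hC.d_val, hf.map_pt]
  constructor
  · intro ht
    by_contra hbd
    have hmem : Hmem D n (f n t.1) := hD.hmem_iff.2 ⟨hcycle, fun h => absurd h hbd⟩
    have hpt : f n t.1 = D.pt n :=
      congrArg Subtype.val ((hmap_eq_of_map_val_eq (s := ⟨f n t.1, hmem⟩) rfl).symm.trans ht)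
    exact hbd ⟨D.pt (n + 1), (hD.bd_pt n).trans hpt.symm⟩
  · intro hbd
    by_contra hne
    have hval := map_val_eq_of_hmap_ne_hpt hne
    exact hne (hD.eq_hpt_of_val_mem_range_bd (hval ▸ hbd))

theorem hmem_of_hmem_map_of_injective (hf : IsChainMap C D f) (hinj : ∀ n, Function.Injective (f n))
    (hC : C.IsComplex) (hD : D.IsComplex) {x : C.X n} (hx : Hmem D n (f n x)) : Hmem C n x := by
  obtain ⟨hcycle, hbd⟩ := hD.hmem_iff.1 hx
  refine hC.hmem_iff.2 ⟨?_, ?_⟩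
  · rwa [← hf.map_eq_pt_iff (hinj _), hf.map_d]
  · rintro ⟨w, rfl⟩
    exact (hf.map_eq_pt_iff (hinj n)).1 (hbd ⟨f (n + 1) w, (hf.map_bd w).symm⟩)

theorem hmem_of_hmem_map_of_ne_pt (hf : IsChainMap C D f) (hC : C.IsComplex) (hD : D.IsComplex)
    {x : C.X n} (hcycle : C.d n x = C.pt (n - 1)) (hx : Hmem D n (f n x))
    (hne : f n x ≠ D.pt n) : Hmem C n x := by
  refine hC.hmem_iff.2 ⟨hcycle, ?_⟩
  rintro ⟨w, rfl⟩
  exact absurd ((hD.hmem_iff.1 hx).2 ⟨f (n + 1) w, (hf.map_bd w).symm⟩) hne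

theorem mem_range_bd_of_map_mem_range_bd (hf : IsChainMap C D f)
    (hsurj : Function.Surjective (f (n + 1))) {x : C.X n} (hx : f n x ∈ Set.range (D.bd n))
    (hne : f n x ≠ D.pt n) : x ∈ Set.range (C.bd n) := by
  obtain ⟨z, hz⟩ := hx
  obtain ⟨y, rfl⟩ := hsurj z
  rw [← hf.map_bd] at hz
  exact ⟨y, (hf.eq_of_map_eq hz.symm hne).symm⟩

end IsChainMap

end InducedMap

/-- A short exact sequence `X → Y → Z` of chain complexes of pointed sets. -/
structure IsShortExact (X Y Z : PreCC) (f : ∀ n, X.X n → Y.X n) (g : ∀ n, Y.X n → Z.X n) :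
    Prop where
  isComplex_left : X.IsComplex
  isComplex_mid : Y.IsComplex
  isComplex_right : Z.IsComplex
  isChainMap_left : IsChainMap X Y f
  injective : ∀ n, Function.Injective (f n)
  isChainMap_right : IsChainMap Y Z g
  surjective : ∀ n, Function.Surjective (g n)
  exact : ∀ n, ∀ y : Y.X n, g n y = Z.pt n ↔ y ∈ Set.range (f n)

/-- The graph of the connecting map `Hₙ₊₁(Z) → Hₙ(X)`: the zigzag of the snake lemma from `z` back
along `g`, down along `∂` and back along `f` to `x`. -/
def Connects {X Y Z : PreCC} (f : ∀ n, X.X n → Y.X n) (g : ∀ n, Y.X n → Z.X n) {n : ℤ}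
    (z : HT Z (n + 1)) (x : HT X n) : Prop :=
  ∃ y : Y.X (n + 1), g (n + 1) y = z.1 ∧ Y.bd n y = f n x.1

namespace IsShortExact

variable {X Y Z : PreCC} {f : ∀ n, X.X n → Y.X n} {g : ∀ n, Y.X n → Z.X n} {n : ℤ}

theorem map_map_eq_pt (h : IsShortExact X Y Z f g) (x : X.X n) : g n (f n x) = Z.pt n :=
  (h.exact n _).2 ⟨x, rfl⟩

theorem map_val_eq_pt_iff (h : IsShortExact X Y Z f g) {x : HT X n} :
    f n x.1 = Y.pt n ↔ x = Hpt X n :=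
  (h.isChainMap_left.map_eq_pt_iff (h.injective n)).trans
    ⟨fun hx => Subtype.ext hx, fun hx => congrArg Subtype.val hx⟩

theorem connects_hpt_hpt (h : IsShortExact X Y Z f g) (n : ℤ) :
    Connects f g (Hpt Z (n + 1)) (Hpt X n) :=
  ⟨Y.pt (n + 1), h.isChainMap_right.map_pt _,
    (h.isComplex_mid.bd_pt n).trans (h.isChainMap_left.map_pt n).symm⟩

theorem exists_bd_eq_map (h : IsShortExact X Y Z f g) {y : Y.X (n + 1)}
    (hy : Z.d (n + 1) (g (n + 1) y) = Z.pt (n + 1 - 1)) (hne : g (n + 1) y ≠ Z.pt (n + 1)) :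
    ∃ x : HT X n, Y.bd n y = f n x.1 := by
  have hker : g n (Y.bd n y) = Z.pt n := by
    rw [h.isChainMap_right.map_bd, PreCC.bd_eq_pt_iff, hy]
  obtain ⟨x, hx⟩ := (h.exact n _).1 hker
  suffices hmem : Hmem X n x from ⟨⟨x, hmem⟩, hx.symm⟩
  refine h.isComplex_left.hmem_iff.2 ⟨?_, ?_⟩
  · rw [← h.isChainMap_left.map_eq_pt_iff (h.injective _), h.isChainMap_left.map_d, hx,
      h.isComplex_mid.d_bd]
  · rintro ⟨w, rfl⟩
    have hbd : Y.bd n y = Y.bd n (f (n + 1) w) := by rw [← hx, h.isChainMap_left.map_bd]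
    by_contra hx_ne
    have hy_ne : Y.bd n y ≠ Y.pt n := by
      rwa [← hx, Ne, h.isChainMap_left.map_eq_pt_iff (h.injective n)]
    have hyw : y = f (n + 1) w := h.isComplex_mid.eq_of_bd_eq hbd hy_ne
    exact hne (hyw ▸ h.map_map_eq_pt w)

theorem exists_connects (h : IsShortExact X Y Z f g) (z : HT Z (n + 1)) :
    ∃ x : HT X n, Connects f g z x := by
  by_cases hz : z = Hpt Z (n + 1)
  · exact ⟨Hpt X n, hz ▸ h.connects_hpt_hpt n⟩
  · obtain ⟨y, hy⟩ := h.surjective (n + 1) z.1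
    obtain ⟨x, hx⟩ := h.exists_bd_eq_map (hy ▸ h.isComplex_right.d_val z)
      fun hpt => hz (Subtype.ext (hy.symm.trans hpt))
    exact ⟨x, y, hy, hx⟩

theorem eq_hpt_of_connects_hpt (h : IsShortExact X Y Z f g) {x : HT X n}
    (hx : Connects f g (Hpt Z (n + 1)) x) : x = Hpt X n := by
  obtain ⟨y, hy, hyx⟩ := hx
  obtain ⟨w, rfl⟩ := (h.exact _ y).1 hy
  rw [← h.isChainMap_left.map_bd] at hyx
  exact h.isComplex_left.eq_hpt_of_val_mem_range_bd ⟨w, h.injective n hyx⟩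

theorem connects_right_unique (h : IsShortExact X Y Z f g) {z : HT Z (n + 1)} {x x' : HT X n}
    (hx : Connects f g z x) (hx' : Connects f g z x') : x = x' := by
  by_cases hz : z = Hpt Z (n + 1)
  · subst hz
    rw [h.eq_hpt_of_connects_hpt hx, h.eq_hpt_of_connects_hpt hx']
  · obtain ⟨y, hy, hyx⟩ := hx
    obtain ⟨y', hy', hyx'⟩ := hx'
    have hyy' : y = y' := h.isChainMap_right.eq_of_map_eq (hy.trans hy'.symm)
      fun hpt => hz (Subtype.ext (hy.symm.trans hpt))
    subst hyy'
    exact Subtype.ext (h.injective n (hyx.symm.trans hyx'))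

theorem connects_left_unique (h : IsShortExact X Y Z f g) {z z' : HT Z (n + 1)} {x : HT X n}
    (hz : Connects f g z x) (hz' : Connects f g z' x) (hx : x ≠ Hpt X n) : z = z' := by
  obtain ⟨y, hy, hyx⟩ := hz
  obtain ⟨y', hy', hyx'⟩ := hz'
  have hyy' : y = y' := h.isComplex_mid.eq_of_bd_eq (hyx.trans hyx'.symm)
    fun hpt => hx (h.map_val_eq_pt_iff.1 (hyx.symm.trans hpt))
  subst hyy'
  exact Subtype.ext (hy.symm.trans hy')

theorem hmap_eq_hpt_iff_mem_range_hmap (h : IsShortExact X Y Z f g) {t : HT Y n} :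
    Hmap Y Z g n t = Hpt Z n ↔ t ∈ Set.range (Hmap X Y f n) := by
  constructor
  · intro ht
    have hbd : g n t.1 ∈ Set.range (Z.bd n) :=
      (h.isChainMap_right.hmap_eq_hpt_iff h.isComplex_mid h.isComplex_right).1 ht
    have hker : g n t.1 = Z.pt n := by
      by_contra hne
      have ht_bd := h.isChainMap_right.mem_range_bd_of_map_mem_range_bd (h.surjective _) hbd hne
      rw [h.isComplex_mid.eq_hpt_of_val_mem_range_bd ht_bd] at hne
      exact hne (h.isChainMap_right.map_pt n)
    obtain ⟨x, hx⟩ := (h.exact n _).1 hker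
    have hmem : Hmem X n x := h.isChainMap_left.hmem_of_hmem_map_of_injective h.injective
      h.isComplex_left h.isComplex_mid (hx ▸ t.2)
    exact ⟨⟨x, hmem⟩, hmap_eq_of_map_val_eq hx⟩
  · rintro ⟨x, rfl⟩
    by_cases hx : Hmap X Y f n x = Hpt Y n
    · rw [hx, h.isChainMap_right.hmap_hpt]
    · apply hmap_eq_of_map_val_eq
      rw [← map_val_eq_of_hmap_ne_hpt hx]
      exact h.map_map_eq_pt x.1

theorem connects_hpt_iff_mem_range_hmap (h : IsShortExact X Y Z f g) {z : HT Z (n + 1)} :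
    Connects f g z (Hpt X n) ↔ z ∈ Set.range (Hmap Y Z g (n + 1)) := by
  by_cases hz : z = Hpt Z (n + 1)
  · subst hz
    exact iff_of_true (h.connects_hpt_hpt n) ⟨Hpt Y _, h.isChainMap_right.hmap_hpt _⟩
  constructor
  · rintro ⟨y, hy, hbd⟩
    have hcycle : Y.d (n + 1) y = Y.pt (n + 1 - 1) :=
      PreCC.bd_eq_pt_iff.1 (hbd.trans (h.isChainMap_left.map_pt n))
    have hmem : Hmem Y (n + 1) y := h.isChainMap_right.hmem_of_hmem_map_of_ne_pt h.isComplex_mid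
      h.isComplex_right hcycle (hy ▸ z.2) fun hpt => hz (Subtype.ext (hy.symm.trans hpt))
    exact ⟨⟨y, hmem⟩, hmap_eq_of_map_val_eq hy⟩
  · rintro ⟨t, rfl⟩
    have hbd : Y.bd n t.1 = Y.pt n := PreCC.bd_eq_pt_iff.2 (h.isComplex_mid.d_val t)
    exact ⟨t.1, map_val_eq_of_hmap_ne_hpt hz, hbd.trans (h.isChainMap_left.map_pt n).symm⟩

theorem hmem_map_of_bd_eq_map (h : IsShortExact X Y Z f g) {x : X.X n} {y : Y.X (n + 1)}
    (hy : Y.bd n y = f n x) (hx : f n x ≠ Y.pt n) : Hmem Z (n + 1) (g (n + 1) y) := by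
  refine h.isComplex_right.hmem_iff.2 ⟨?_, fun hbd => ?_⟩
  · rw [← PreCC.bd_eq_pt_iff, ← h.isChainMap_right.map_bd, hy, h.map_map_eq_pt]
  · by_contra hne
    obtain ⟨v, rfl⟩ :=
      h.isChainMap_right.mem_range_bd_of_map_mem_range_bd (h.surjective _) hbd hne
    exact hx (hy.symm.trans (PreCC.bd_eq_pt_iff.2 (h.isComplex_mid.d_bd v)))

theorem hmap_eq_hpt_iff_exists_connects (h : IsShortExact X Y Z f g) {x : HT X n} :
    Hmap X Y f n x = Hpt Y n ↔ ∃ z, Connects f g z x := by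
  rw [h.isChainMap_left.hmap_eq_hpt_iff h.isComplex_left h.isComplex_mid]
  constructor
  · rintro ⟨y, hy⟩
    by_cases hx : x = Hpt X n
    · exact ⟨Hpt Z (n + 1), hx ▸ h.connects_hpt_hpt n⟩
    · exact ⟨⟨_, h.hmem_map_of_bd_eq_map hy (mt h.map_val_eq_pt_iff.1 hx)⟩, y, rfl, hy⟩
  · rintro ⟨z, y, -, hy⟩
    exact ⟨y, hy⟩

end IsShortExact

/-- **Long exact sequence in homology.** Given a short exact sequence of chain complexes
of pointed sets `X →f Y →g Z` (each `fₙ` injective, each `gₙ` surjective and injective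
away from the basepoint, and `gₙ⁻¹(∗) = fₙ(Xₙ)`), there are connecting pointed maps
`δₙ : Hₙ₊₁(Z) → Hₙ(X)`, injective away from the basepoint, making the sequence
`⋯ → Hₙ₊₁(Z) → Hₙ(X) → Hₙ(Y) → Hₙ(Z) → Hₙ₋₁(X) → ⋯` exact at every term. -/
theorem stmt7 (X Y Z : PreCC) (hX : X.IsComplex) (hY : Y.IsComplex) (hZ : Z.IsComplex)
    (f : ∀ n, X.X n → Y.X n) (hf : IsChainMap X Y f)
    (hfinj : ∀ n, Function.Injective (f n))
    (g : ∀ n, Y.X n → Z.X n) (hg : IsChainMap Y Z g)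
    (hgsurj : ∀ n, Function.Surjective (g n))
    (hexact : ∀ n, ∀ y : Y.X n, g n y = Z.pt n ↔ y ∈ Set.range (f n)) :
    ∃ δ : ∀ n : ℤ, HT Z (n + 1) → HT X n,
      -- each δₙ is pointed
      (∀ n, δ n (Hpt Z (n + 1)) = Hpt X n) ∧
      -- each δₙ is injective away from the basepoint
      (∀ n, ∀ a b : HT Z (n + 1), δ n a = δ n b → δ n a ≠ Hpt X n → a = b) ∧
      -- exactness at Hₙ(Y)
      (∀ n, ∀ t : HT Y n, Hmap Y Z g n t = Hpt Z n ↔ t ∈ Set.range (Hmap X Y f n)) ∧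
      -- exactness at Hₙ₊₁(Z)
      (∀ n, ∀ t : HT Z (n + 1), δ n t = Hpt X n ↔ t ∈ Set.range (Hmap Y Z g (n + 1))) ∧
      -- exactness at Hₙ(X)
      (∀ n, ∀ t : HT X n, Hmap X Y f n t = Hpt Y n ↔ t ∈ Set.range (δ n)) := by
  have h : IsShortExact X Y Z f g := ⟨hX, hY, hZ, hf, hfinj, hg, hgsurj, hexact⟩
  choose δ hδ using fun n (z : HT Z (n + 1)) => h.exists_connects z
  have hδ_iff {n : ℤ} {z : HT Z (n + 1)} {x : HT X n} : δ n z = x ↔ Connects f g z x :=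
    ⟨fun hx => hx ▸ hδ n z, h.connects_right_unique (hδ n z)⟩
  refine ⟨δ, fun n => ?_, fun n a b hab hne => ?_, fun n t => ?_, fun n t => ?_, fun n t => ?_⟩
  · exact hδ_iff.2 (h.connects_hpt_hpt n)
  · exact h.connects_left_unique (hδ n a) (hδ_iff.1 hab.symm) hne
  · exact h.hmap_eq_hpt_iff_mem_range_hmap
  · exact hδ_iff.trans h.connects_hpt_iff_mem_range_hmap
  · exact h.hmap_eq_hpt_iff_exists_connects.trans (exists_congr fun _ => hδ_iff.symm)
end

section
/- (Functoriality of homology.) Let X, Y, Z be chain complexes of pointed sets and f : X → Y, g : Y → Z chain maps. Then for every n, Hₙ(id_X) = id on Hₙ(X), and Hₙ(g ∘ f) = Hₙ(g) ∘ Hₙ(f), where g ∘ f is the levelwise composite chain map and Hₙ(−) denotes the induced map on homology. -/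
/-!
Let `x ∈ Hₙ(X)` with `fₙ(x) ∉ Hₙ(Y)`, the only case in which `Hₙ(g ∘ f)` and `Hₙ(g) ∘ Hₙ(f)` could
differ at `x`. A chain map sends cycles to cycles, so `fₙ(x)` can only fail to lie in `Hₙ(Y)` by
being a boundary. Then `gₙ(fₙ(x))` is a boundary as well, and the only boundary that can lie in
`Hₙ(Z)` is the basepoint, so both maps send `x` to `∗`.
-/

namespace PreCC

variable (C : PreCC) {n : ℤ}

/-- The elements of `Xₙ` killed by the differential; `Hmem` asks this of its elements other than
the basepoint. -/
def IsCycle (x : C.X n) : Prop :=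
  C.d n x = C.pt (n - 1)

/-- The elements of `Xₙ` in the image of `dₙ₊₁`, whose values are transported from degree
`n + 1 - 1` to degree `n`. -/
def IsBoundary (x : C.X n) : Prop :=
  ∃ z : C.X (n + 1), C.castX (add_sub_cancel_right n 1) (C.d (n + 1) z) = x

end PreCC

/-- A family of pointed maps commuting with the differentials. This is a chain map without the
requirement of injectivity away from the basepoint. -/
structure IsPointedChainMap (C D : PreCC) (f : ∀ n, C.X n → D.X n) : Prop where
  map_pt : ∀ n, f n (C.pt n) = D.pt n
  map_d : ∀ n (x : C.X n), f (n - 1) (C.d n x) = D.d n (f n x)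

section

variable {C D E : PreCC} {f : ∀ n, C.X n → D.X n} {g : ∀ n, D.X n → E.X n} {n : ℤ}

theorem IsChainMap.isPointedChainMap (hf : IsChainMap C D f) : IsPointedChainMap C D f :=
  ⟨hf.1, hf.2.2⟩

theorem hmem_iff {x : C.X n} : Hmem C n x ↔ x = C.pt n ∨ C.IsCycle x ∧ ¬C.IsBoundary x := by
  simp only [Hmem, PreCC.IsCycle, PreCC.IsBoundary, not_exists]
  tauto

theorem Hmem.eq_pt_of_isBoundary {x : C.X n} (hx : Hmem C n x) (hb : C.IsBoundary x) :
    x = C.pt n :=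
  (hmem_iff.mp hx).resolve_right fun h => h.2 hb

theorem map_castX (f : ∀ n, C.X n → D.X n) {m : ℤ} (h : m = n) (x : C.X m) :
    f n (C.castX h x) = D.castX h (f m x) := by
  subst h
  rfl

namespace IsPointedChainMap

theorem map_isCycle (hf : IsPointedChainMap C D f) {x : C.X n} (hx : C.IsCycle x) :
    D.IsCycle (f n x) :=
  calc
    D.d n (f n x) = f (n - 1) (C.d n x) := (hf.map_d n x).symm
    _ = f (n - 1) (C.pt (n - 1)) := congrArg _ hx
    _ = D.pt (n - 1) := hf.map_pt _

theorem map_isBoundary (hf : IsPointedChainMap C D f) {x : C.X n} (hx : C.IsBoundary x) :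
    D.IsBoundary (f n x) := by
  obtain ⟨z, rfl⟩ := hx
  exact ⟨f (n + 1) z, by rw [map_castX f, hf.map_d]⟩

theorem isBoundary_of_not_hmem (hf : IsPointedChainMap C D f) {x : C.X n} (hx : Hmem C n x)
    (hfx : ¬Hmem D n (f n x)) : D.IsBoundary (f n x) := by
  by_contra hb
  apply hfx
  rcases hmem_iff.mp hx with rfl | ⟨hcycle, -⟩
  · exact Or.inl (hf.map_pt n)
  · exact hmem_iff.mpr (Or.inr ⟨hf.map_isCycle hcycle, hb⟩)

end IsPointedChainMap

theorem Hmap_of_hmem {x : HT C n} (h : Hmem D n (f n x.1)) : Hmap C D f n x = ⟨f n x.1, h⟩ :=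
  dif_pos h

theorem Hmap_of_not_hmem {x : HT C n} (h : ¬Hmem D n (f n x.1)) : Hmap C D f n x = Hpt D n :=
  dif_neg h

theorem Hmap_of_eq_pt {x : HT C n} (h : f n x.1 = D.pt n) : Hmap C D f n x = Hpt D n :=
  (Hmap_of_hmem (Or.inl h)).trans (Subtype.ext h)

theorem Hmap_of_isBoundary {x : HT C n} (hb : D.IsBoundary (f n x.1)) :
    Hmap C D f n x = Hpt D n := by
  by_cases h : Hmem D n (f n x.1)
  · exact Hmap_of_eq_pt (h.eq_pt_of_isBoundary hb)
  · exact Hmap_of_not_hmem h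

theorem Hmap_id (C : PreCC) (n : ℤ) : Hmap C C (fun _ x => x) n = id :=
  funext fun x => Hmap_of_hmem x.2

theorem Hmap_comp (hf : IsPointedChainMap C D f) (hg : IsPointedChainMap D E g) (n : ℤ) :
    Hmap C E (fun n => g n ∘ f n) n = Hmap D E g n ∘ Hmap C D f n := by
  funext x
  rw [Function.comp_apply]
  by_cases hfx : Hmem D n (f n x.1)
  · rw [Hmap_of_hmem hfx]
    rfl
  · have hb : E.IsBoundary (g n (f n x.1)) :=
      hg.map_isBoundary (hf.isBoundary_of_not_hmem x.2 hfx)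
    calc
      Hmap C E (fun n => g n ∘ f n) n x = Hpt E n := Hmap_of_isBoundary hb
      _ = Hmap D E g n (Hpt D n) := (Hmap_of_eq_pt (hg.map_pt n)).symm
      _ = Hmap D E g n (Hmap C D f n x) := by rw [Hmap_of_not_hmem hfx]

end

theorem stmt9_general (X Y Z : PreCC)
    (f : ∀ n, X.X n → Y.X n) (hf : IsPointedChainMap X Y f)
    (g : ∀ n, Y.X n → Z.X n) (hg : IsPointedChainMap Y Z g) (n : ℤ) :
    Hmap X X (fun _ x => x) n = id ∧
    Hmap X Z (fun n => g n ∘ f n) n = Hmap Y Z g n ∘ Hmap X Y f n :=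
  ⟨Hmap_id X n, Hmap_comp hf hg n⟩

/-- **Functoriality of homology.** For chain maps `f : X → Y` and `g : Y → Z` of chain
complexes of pointed sets, `Hₙ(id) = id` and `Hₙ(g ∘ f) = Hₙ(g) ∘ Hₙ(f)` for all `n`. -/
theorem stmt9 (X Y Z : PreCC) (hX : X.IsComplex) (hY : Y.IsComplex) (hZ : Z.IsComplex)
    (f : ∀ n, X.X n → Y.X n) (hf : IsChainMap X Y f)
    (g : ∀ n, Y.X n → Z.X n) (hg : IsChainMap Y Z g) (n : ℤ) :
    Hmap X X (fun _ x => x) n = id ∧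
    Hmap X Z (fun n => g n ∘ f n) n = Hmap Y Z g n ∘ Hmap X Y f n :=
  stmt9_general X Y Z f hf.isPointedChainMap g hg.isPointedChainMap n
end

section
/- Let f : X → Y be a chain map of chain complexes of pointed sets with each fₙ injective. Define the cokernel complex Q by Qₙ = (Yₙ \ fₙ(Xₙ)) ∪ {∗} with differential d^Q(y) = d^Y(y) if d^Y(y) ∉ fₙ₋₁(Xₙ₋₁), and d^Q(y) = ∗ otherwise. Then Q is a chain complex of pointed sets (its differentials are pointed, injective away from the basepoint, and consecutive differentials compose to the constant map at ∗), and f is a quasi-isomorphism if and only if Q is exact. -/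
/-!
Identify homology with its nontrivial classes: the cycles `x ≠ ∗` that are not boundaries.
For `f` levelwise injective, `Q` is exact iff every `y ∉ im f` with `d y ∈ im f` is a boundary
of `Y`; `H(f)` is injective iff no nontrivial class of `X` becomes a boundary in `Y`; and `H(f)` is
surjective iff every nontrivial class of `Y` lies in `im f`.

If `Q` is exact and a nontrivial class `x` has `f x = d z`, then `z ∉ im f`, so `z` is a boundary
and `f x = d z = ∗`, which is absurd. A nontrivial class `y ∉ im f` of `Y` has `d y = ∗ ∈ im f`,
so it would be a boundary. Conversely, let `y ∉ im f` with `d y = f b`. If `b ≠ ∗`, injectivity of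
`d` away from `∗` keeps `b` from being a boundary in `X`, so `b` is a nontrivial class killed
by `H(f)`. Hence `d y = ∗`, and `y ∉ im f` is a boundary by surjectivity of `H(f)`.
-/

namespace PreCC

variable {C : PreCC} {n : ℤ} {x : C.X n}

/-- The boundaries of `C`, as an inductive family over the degree: unlike in `Hmem`, a boundary
is by construction in a degree of the form `n - 1`, so no transport along `n + 1 - 1 = n` occurs. -/
inductive IsBoundary_s10 (C : PreCC) : ∀ n, C.X n → Prop
  | d (n : ℤ) (z : C.X n) : IsBoundary_s10 C (n - 1) (C.d n z)

theorem isBoundary_iff_exists_castX {m : ℤ} (h : m - 1 = n) :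
    C.IsBoundary_s10 n x ↔ ∃ z : C.X m, C.castX h (C.d m z) = x := by
  constructor
  · rintro ⟨k, z⟩
    obtain rfl : m = k := by omega
    exact ⟨z, rfl⟩
  · rintro ⟨z, rfl⟩
    subst h
    exact .d m z

theorem isBoundary_sub_one_iff {x : C.X (n - 1)} :
    C.IsBoundary_s10 (n - 1) x ↔ ∃ z, C.d n z = x :=
  isBoundary_iff_exists_castX rfl

theorem IsComplex.d_eq_pt_of_isBoundary (hC : C.IsComplex) (hx : C.IsBoundary_s10 n x) :
    C.d n x = C.pt (n - 1) := by
  obtain ⟨m, z⟩ := hx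
  exact hC.2.2 m z

/-- `x` is an element of `Hₙ(C)` other than the basepoint. -/
structure IsNontrivialClass (C : PreCC) (n : ℤ) (x : C.X n) : Prop where
  ne_pt : x ≠ C.pt n
  d_eq_pt : C.d n x = C.pt (n - 1)
  not_isBoundary : ¬ C.IsBoundary_s10 n x

theorem hmem_iff : Hmem C n x ↔ x = C.pt n ∨ C.IsNontrivialClass n x := by
  rw [Hmem, ← not_exists, ← isBoundary_iff_exists_castX]
  exact or_congr_right ⟨fun ⟨hne, hd, hb⟩ => ⟨hne, hd, hb⟩, fun ⟨hne, hd, hb⟩ => ⟨hne, hd, hb⟩⟩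

theorem IsNontrivialClass.hmem (hx : C.IsNontrivialClass n x) : Hmem C n x :=
  hmem_iff.2 (.inr hx)

theorem exact_iff_forall_not_isNontrivialClass :
    C.Exact ↔ ∀ n x, ¬ C.IsNontrivialClass n x :=
  ⟨fun hC n x hx => hx.ne_pt (hC n x hx.hmem),
    fun hC n x hx => (hmem_iff.1 hx).resolve_right (hC n x)⟩

end PreCC

section ChainMap

variable {X Y : PreCC} {f : ∀ n, X.X n → Y.X n} {n : ℤ}

theorem IsChainMap.map_pt_s10 (hf : IsChainMap X Y f) (n : ℤ) : f n (X.pt n) = Y.pt n := hf.1 n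

theorem IsChainMap.map_d_s10 (hf : IsChainMap X Y f) (n : ℤ) (x : X.X n) :
    f (n - 1) (X.d n x) = Y.d n (f n x) := hf.2.2 n x

theorem IsChainMap.pt_mem_range (hf : IsChainMap X Y f) (n : ℤ) : Y.pt n ∈ Set.range (f n) :=
  ⟨X.pt n, hf.map_pt_s10 n⟩

theorem IsChainMap.isBoundary_map (hf : IsChainMap X Y f) {x : X.X n} (hx : X.IsBoundary_s10 n x) :
    Y.IsBoundary_s10 n (f n x) := by
  obtain ⟨m, z⟩ := hx
  rw [hf.map_d_s10]
  exact .d m (f m z)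

theorem IsChainMap.map_eq_pt_iff_s10 (hf : IsChainMap X Y f) (hinj : Function.Injective (f n))
    {x : X.X n} : f n x = Y.pt n ↔ x = X.pt n := by
  rw [← hf.map_pt_s10, hinj.eq_iff]

theorem IsChainMap.isNontrivialClass_map_iff (hf : IsChainMap X Y f)
    (hinj : ∀ n, Function.Injective (f n)) {x : X.X n} :
    Y.IsNontrivialClass n (f n x) ↔ X.IsNontrivialClass n x ∧ ¬ Y.IsBoundary_s10 n (f n x) := by
  have d_map : Y.d n (f n x) = Y.pt (n - 1) ↔ X.d n x = X.pt (n - 1) := by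
    rw [← hf.map_d_s10, hf.map_eq_pt_iff_s10 (hinj _)]
  have map_pt_s10 := hf.map_eq_pt_iff_s10 (hinj n) (x := x)
  constructor
  · rintro ⟨hne, hd, hb⟩
    exact ⟨⟨mt map_pt_s10.2 hne, d_map.1 hd, mt hf.isBoundary_map hb⟩, hb⟩
  · rintro ⟨⟨hne, hd, -⟩, hb⟩
    exact ⟨mt map_pt_s10.1 hne, d_map.2 hd, hb⟩

theorem val_hmap_of_hmem {x : HT X n} (hx : Hmem Y n (f n x.1)) :
    (Hmap X Y f n x).1 = f n x.1 :=
  congrArg Subtype.val (dif_pos hx)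

theorem hmap_of_not_hmem {x : HT X n} (hx : ¬ Hmem Y n (f n x.1)) :
    Hmap X Y f n x = Hpt Y n :=
  dif_neg hx

theorem IsChainMap.hmap_hpt_s10 (hf : IsChainMap X Y f) : Hmap X Y f n (Hpt X n) = Hpt Y n :=
  Subtype.ext <| (val_hmap_of_hmem (.inl (hf.map_pt_s10 n))).trans (hf.map_pt_s10 n)

theorem IsChainMap.injective_hmap_iff (hf : IsChainMap X Y f)
    (hinj : ∀ n, Function.Injective (f n)) :
    Function.Injective (Hmap X Y f n) ↔
      ∀ x, X.IsNontrivialClass n x → ¬ Y.IsBoundary_s10 n (f n x) := by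
  constructor
  · intro hH x hx hb
    have hfx : ¬ Hmem Y n (f n x) := by
      rw [PreCC.hmem_iff, hf.map_eq_pt_iff_s10 (hinj n), hf.isNontrivialClass_map_iff hinj]
      exact not_or.2 ⟨hx.ne_pt, fun h => h.2 hb⟩
    have hx_pt : (⟨x, hx.hmem⟩ : HT X n) = Hpt X n :=
      hH ((hmap_of_not_hmem hfx).trans hf.hmap_hpt_s10.symm)
    exact hx.ne_pt (congrArg Subtype.val hx_pt)
  · intro hb
    have hval (x : HT X n) : (Hmap X Y f n x).1 = f n x.1 := by
      refine val_hmap_of_hmem (PreCC.hmem_iff.2 ?_)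
      rw [hf.map_eq_pt_iff_s10 (hinj n), hf.isNontrivialClass_map_iff hinj]
      exact (PreCC.hmem_iff.1 x.2).imp_right fun hx => ⟨hx, hb _ hx⟩
    intro x x' h
    exact Subtype.ext <| hinj n <| by rw [← hval, ← hval, h]

theorem IsChainMap.surjective_hmap_iff (hf : IsChainMap X Y f)
    (hinj : ∀ n, Function.Injective (f n)) :
    Function.Surjective (Hmap X Y f n) ↔
      ∀ y, Y.IsNontrivialClass n y → y ∈ Set.range (f n) := by
  constructor
  · intro hH y hy
    obtain ⟨x, hx⟩ := hH ⟨y, hy.hmem⟩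
    have hfx : Hmem Y n (f n x.1) := by
      by_contra hfx
      exact hy.ne_pt (congrArg Subtype.val (hx.symm.trans (hmap_of_not_hmem hfx)))
    exact ⟨x.1, (val_hmap_of_hmem hfx).symm.trans (congrArg Subtype.val hx)⟩
  · rintro hrange ⟨y, hy⟩
    obtain rfl | hy_class := PreCC.hmem_iff.1 hy
    · exact ⟨Hpt X n, hf.hmap_hpt_s10⟩
    · obtain ⟨x, rfl⟩ := hrange y hy_class
      have hx := ((hf.isNontrivialClass_map_iff hinj).1 hy_class).1
      exact ⟨⟨x, hx.hmem⟩, Subtype.ext (val_hmap_of_hmem hy)⟩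

open Classical in
/-- The cokernel complex of `f : X → Y`: the elements of `Y` outside the image of `f`, together with
the basepoint. It is defined for any family of maps `f`, and is a complex once `Y` is one and
`f` is pointed. -/
noncomputable def coker (f : ∀ n, X.X n → Y.X n) : PreCC where
  X n := {y : Y.X n // y = Y.pt n ∨ y ∉ Set.range (f n)}
  pt n := ⟨Y.pt n, Or.inl rfl⟩
  d n y :=
    if h : Y.d n y.1 ∈ Set.range (f (n - 1)) then ⟨Y.pt (n - 1), Or.inl rfl⟩
    else ⟨Y.d n y.1, Or.inr h⟩

namespace coker

theorem val_pt : ((coker f).pt n).1 = Y.pt n := rfl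

theorem d_of_mem_range {q : (coker f).X n} (hq : Y.d n q.1 ∈ Set.range (f (n - 1))) :
    (coker f).d n q = (coker f).pt (n - 1) :=
  dif_pos hq

theorem d_of_notMem_range {q : (coker f).X n} (hq : Y.d n q.1 ∉ Set.range (f (n - 1))) :
    (coker f).d n q = ⟨Y.d n q.1, Or.inr hq⟩ :=
  dif_neg hq

theorem val_d_of_ne_pt {q : (coker f).X n} (hq : (coker f).d n q ≠ (coker f).pt (n - 1)) :
    ((coker f).d n q).1 = Y.d n q.1 :=
  congrArg Subtype.val (d_of_notMem_range (mt d_of_mem_range hq))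

theorem d_eq_pt_iff (hpt : ∀ n, Y.pt n ∈ Set.range (f n)) {q : (coker f).X n} :
    (coker f).d n q = (coker f).pt (n - 1) ↔ Y.d n q.1 ∈ Set.range (f (n - 1)) := by
  refine ⟨fun hd => ?_, d_of_mem_range⟩
  by_contra hq
  have hd_val : Y.d n q.1 = Y.pt (n - 1) :=
    congrArg Subtype.val ((d_of_notMem_range hq).symm.trans hd)
  exact hq (hd_val ▸ hpt (n - 1))

theorem ne_pt_iff (hpt : ∀ n, Y.pt n ∈ Set.range (f n)) {q : (coker f).X n} :
    q ≠ (coker f).pt n ↔ q.1 ∉ Set.range (f n) :=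
  ⟨fun hq => q.2.resolve_left fun h => hq (Subtype.ext h), fun hq h => hq (h ▸ hpt n)⟩

theorem isComplex (hY : Y.IsComplex) (hpt : ∀ n, Y.pt n ∈ Set.range (f n)) :
    (coker f).IsComplex := by
  obtain ⟨d_pt, d_inj, d_d⟩ := hY
  refine ⟨fun n => ?_, fun n a b hab ha => ?_, fun n q => ?_⟩
  · exact d_of_mem_range (by rw [val_pt, d_pt]; exact hpt _)
  · have hab_val : Y.d n a.1 = Y.d n b.1 := by
      rw [← val_d_of_ne_pt ha, ← val_d_of_ne_pt (hab ▸ ha), hab]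
    have ha_val : Y.d n a.1 ≠ Y.pt (n - 1) := fun h => ha (d_of_mem_range (h ▸ hpt _))
    exact Subtype.ext (d_inj n _ _ hab_val ha_val)
  · refine d_of_mem_range ?_
    by_cases hq : (coker f).d n q = (coker f).pt (n - 1)
    · rw [hq, val_pt, d_pt]
      exact hpt _
    · rw [val_d_of_ne_pt hq, d_d]
      exact hpt _

theorem isBoundary_iff (hf : IsChainMap X Y f) {q : (coker f).X n} (hq : q ≠ (coker f).pt n) :
    (coker f).IsBoundary_s10 n q ↔ Y.IsBoundary_s10 n q.1 := by
  constructor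
  · rintro ⟨m, z⟩
    rw [val_d_of_ne_pt hq]
    exact .d m z.1
  · intro hb
    have hq_range : q.1 ∉ Set.range (f n) := (ne_pt_iff hf.pt_mem_range).1 hq
    obtain ⟨y, hy⟩ := q
    obtain ⟨m, z⟩ := hb
    have hz : z ∉ Set.range (f m) := by
      rintro ⟨x, rfl⟩
      exact hq_range ⟨X.d m x, hf.map_d_s10 m x⟩
    have hdz : (coker f).d m ⟨z, .inr hz⟩ = ⟨Y.d m z, hy⟩ := d_of_notMem_range hq_range
    exact hdz ▸ .d m _

theorem isNontrivialClass_iff (hf : IsChainMap X Y f) {q : (coker f).X n} :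
    (coker f).IsNontrivialClass n q ↔
      q.1 ∉ Set.range (f n) ∧ Y.d n q.1 ∈ Set.range (f (n - 1)) ∧ ¬ Y.IsBoundary_s10 n q.1 := by
  rw [← ne_pt_iff hf.pt_mem_range, ← d_eq_pt_iff hf.pt_mem_range]
  constructor
  · rintro ⟨hne, hd, hb⟩
    exact ⟨hne, hd, mt (isBoundary_iff hf hne).2 hb⟩
  · rintro ⟨hne, hd, hb⟩
    exact ⟨hne, hd, mt (isBoundary_iff hf hne).1 hb⟩

theorem exact_iff (hf : IsChainMap X Y f) :
    (coker f).Exact ↔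
      ∀ n, ∀ y ∉ Set.range (f n), Y.d n y ∈ Set.range (f (n - 1)) → Y.IsBoundary_s10 n y := by
  rw [PreCC.exact_iff_forall_not_isNontrivialClass]
  constructor
  · intro hQ n y hy hdy
    by_contra hb
    exact hQ n ⟨y, .inr hy⟩ ((isNontrivialClass_iff hf).2 ⟨hy, hdy, hb⟩)
  · intro hY n q hq
    obtain ⟨hne, hd, hb⟩ := (isNontrivialClass_iff hf).1 hq
    exact hb (hY n q.1 hne hd)

end coker

theorem injective_hmap_of_exact_coker (hY : Y.IsComplex) (hf : IsChainMap X Y f)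
    (hinj : ∀ n, Function.Injective (f n)) (hQ : (coker f).Exact) (n : ℤ) :
    Function.Injective (Hmap X Y f n) := by
  rw [hf.injective_hmap_iff hinj]
  intro x hx hb
  obtain ⟨n, rfl⟩ : ∃ m, n = m - 1 := ⟨n + 1, by omega⟩
  obtain ⟨z, hz⟩ := PreCC.isBoundary_sub_one_iff.1 hb
  have hz_range : z ∉ Set.range (f n) := by
    rintro ⟨w, rfl⟩
    have hw : X.d n w = x := hinj _ ((hf.map_d_s10 n w).trans hz)
    exact hx.not_isBoundary (hw ▸ .d n w)
  have hz_boundary : Y.IsBoundary_s10 n z := (coker.exact_iff hf).1 hQ n z hz_range ⟨x, hz.symm⟩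
  have hfx : f (n - 1) x = Y.pt (n - 1) := hz.symm.trans (hY.d_eq_pt_of_isBoundary hz_boundary)
  exact hx.ne_pt ((hf.map_eq_pt_iff_s10 (hinj _)).1 hfx)

theorem surjective_hmap_of_exact_coker (hf : IsChainMap X Y f)
    (hinj : ∀ n, Function.Injective (f n)) (hQ : (coker f).Exact) (n : ℤ) :
    Function.Surjective (Hmap X Y f n) := by
  rw [hf.surjective_hmap_iff hinj]
  intro y hy
  by_contra hy_range
  refine hy.not_isBoundary ((coker.exact_iff hf).1 hQ n y hy_range ?_)
  exact hy.d_eq_pt ▸ hf.pt_mem_range (n - 1)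

theorem d_eq_pt_of_injective_hmap (hY : Y.IsComplex) (hf : IsChainMap X Y f)
    (hinj : ∀ n, Function.Injective (f n))
    (hH : Function.Injective (Hmap X Y f (n - 1))) {y : Y.X n} (hy : y ∉ Set.range (f n))
    (hdy : Y.d n y ∈ Set.range (f (n - 1))) : Y.d n y = Y.pt (n - 1) := by
  obtain ⟨b, hb⟩ := hdy
  have hfb : Y.IsBoundary_s10 (n - 1) (f (n - 1) b) := hb ▸ .d n y
  by_contra hne
  have hb_class : X.IsNontrivialClass (n - 1) b := by
    refine ⟨fun h => hne (by rw [← hb, h, hf.map_pt_s10]), ?_, fun hb_boundary => ?_⟩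
    · rw [← hf.map_eq_pt_iff_s10 (hinj _), hf.map_d_s10]
      exact hY.d_eq_pt_of_isBoundary hfb
    · obtain ⟨a, rfl⟩ := PreCC.isBoundary_sub_one_iff.1 hb_boundary
      have hay : y = f n a := hY.2.1 n y (f n a) (hb.symm.trans (hf.map_d_s10 n a)) hne
      exact hy ⟨a, hay.symm⟩
  exact (hf.injective_hmap_iff hinj).1 hH b hb_class hfb

theorem exact_coker_of_bijective_hmap (hY : Y.IsComplex) (hf : IsChainMap X Y f)
    (hinj : ∀ n, Function.Injective (f n)) (hH : ∀ n, Function.Bijective (Hmap X Y f n)) :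
    (coker f).Exact := by
  rw [coker.exact_iff hf]
  intro n y hy hdy
  by_contra hb
  have hy_class : Y.IsNontrivialClass n y :=
    { ne_pt := fun h => hy (h ▸ hf.pt_mem_range n)
      d_eq_pt := d_eq_pt_of_injective_hmap hY hf hinj (hH (n - 1)).injective hy hdy
      not_isBoundary := hb }
  exact hy ((hf.surjective_hmap_iff hinj).1 (hH n).surjective y hy_class)

end ChainMap

open Classical in
/-- For a levelwise injective chain map `f : X → Y` of chain complexes of pointed sets,
the cokernel complex `Q`, with `Qₙ = (Yₙ \ fₙ(Xₙ)) ∪ {∗}` and differential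
`d(y) = dʸ(y)` if `dʸ(y) ∉ fₙ₋₁(Xₙ₋₁)` and `d(y) = ∗` otherwise, is a chain complex of
pointed sets, and `f` is a quasi-isomorphism if and only if `Q` is exact. -/
theorem stmt10 (X Y : PreCC) (hX : X.IsComplex) (hY : Y.IsComplex)
    (f : ∀ n, X.X n → Y.X n) (hf : IsChainMap X Y f)
    (hfinj : ∀ n, Function.Injective (f n)) :
    let Q : PreCC :=
      ⟨fun n => {y : Y.X n // y = Y.pt n ∨ y ∉ Set.range (f n)},
       fun n => ⟨Y.pt n, Or.inl rfl⟩,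
       fun n y =>
         if h : Y.d n y.1 ∈ Set.range (f (n - 1)) then ⟨Y.pt (n - 1), Or.inl rfl⟩
         else ⟨Y.d n y.1, Or.inr h⟩⟩
    Q.IsComplex ∧ ((∀ n, Function.Bijective (Hmap X Y f n)) ↔ Q.Exact) := by
  intro Q
  exact ⟨coker.isComplex hY hf.pt_mem_range, exact_coker_of_bijective_hmap hY hf hfinj,
    fun hQ n => ⟨injective_hmap_of_exact_coker hY hf hfinj hQ n,
      surjective_hmap_of_exact_coker hf hfinj hQ n⟩⟩
end

section
/- (Factorization of chain maps.) Let f : X → Y be a chain map of chain complexes of pointed sets. Define Zₙ = {x ∈ Xₙ : fₙ(x) ≠ ∗} ∪ {∗} with differential d^Z(x) = d^X(x) if fₙ₋₁(d^X(x)) ≠ ∗, and d^Z(x) = ∗ otherwise. Then Z is a chain complex of pointed sets (its differentials are pointed, injective away from the basepoint, and consecutive differentials compose to the constant map at ∗); the maps qₙ : Xₙ → Zₙ given by qₙ(x) = x if fₙ(x) ≠ ∗ and qₙ(x) = ∗ otherwise form a chain map with each qₙ surjective and injective away from the basepoint; the maps mₙ : Zₙ → Yₙ given by mₙ(x) = fₙ(x)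 (and ∗ ↦ ∗) form a chain map with each mₙ injective; and fₙ = mₙ ∘ qₙ for all n. -/
/-!
Since `m : Z → Y` is levelwise injective, every identity in `Z` may be checked in `Y`. So `Z`
inherits the axioms of a chain complex from `Y`, and `q` inherits those of a chain map from
`f = m ∘ q`.
-/

section PointedSets

variable {A B : Type*}

/-- The coimage `A / f⁻¹(b₀)` of a map `f : (A, a₀) → (B, b₀)` of pointed sets, encoded as the set
of points of `A` that are `a₀` or are not sent to `b₀`. -/
def PointedCoimage (a₀ : A) (b₀ : B) (f : A → B) : Type _ :=
  {x : A // x = a₀ ∨ f x ≠ b₀}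

namespace PointedCoimage

open Classical in
/-- The quotient map `A → A / f⁻¹(b₀)`, which collapses the fibre over `b₀` to the basepoint. -/
noncomputable def proj (a₀ : A) (b₀ : B) (f : A → B) (x : A) : PointedCoimage a₀ b₀ f :=
  if h : f x ≠ b₀ then ⟨x, Or.inr h⟩ else ⟨a₀, Or.inl rfl⟩

/-- The map `A / f⁻¹(b₀) → B` induced by `f`. -/
def toCodomain {a₀ : A} {b₀ : B} {f : A → B} (z : PointedCoimage a₀ b₀ f) : B :=
  f z.1

variable {a₀ : A} {b₀ : B} {f : A → B}

theorem proj_val (z : PointedCoimage a₀ b₀ f) : proj a₀ b₀ f z.1 = z := by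
  by_cases h : f z.1 = b₀
  · have hz : z.1 = a₀ := z.2.resolve_right (not_not_intro h)
    exact (dif_neg (not_not_intro h)).trans (Subtype.ext hz.symm)
  · exact dif_pos h

theorem proj_surjective : Function.Surjective (proj a₀ b₀ f) :=
  fun z => ⟨z.1, proj_val z⟩

theorem toCodomain_proj (hf : f a₀ = b₀) (x : A) : toCodomain (proj a₀ b₀ f x) = f x := by
  by_cases h : f x = b₀
  · calc toCodomain (proj a₀ b₀ f x) = f a₀ := congrArg toCodomain (dif_neg (not_not_intro h))
      _ = f x := hf.trans h.symm
  · exact congrArg toCodomain (dif_pos h)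

theorem toCodomain_injective (hf : ∀ a b, f a = f b → f a ≠ b₀ → a = b) :
    Function.Injective (toCodomain : PointedCoimage a₀ b₀ f → B) := by
  intro y z (hyz : f y.1 = f z.1)
  apply Subtype.ext
  by_cases h : f y.1 = b₀
  · have hy : y.1 = a₀ := y.2.resolve_right (not_not_intro h)
    have hz : z.1 = a₀ := z.2.resolve_right (not_not_intro (hyz.symm.trans h))
    exact hy.trans hz.symm
  · exact hf _ _ hyz h

end PointedCoimage

end PointedSets

section Injective

variable {X Y Z : PreCC} {f : ∀ n, X.X n → Y.X n} {q : ∀ n, X.X n → Z.X n}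
  {m : ∀ n, Z.X n → Y.X n}

theorem PreCC.IsComplex.of_injective (hY : Y.IsComplex) (hm : IsChainMap Z Y m)
    (hm_inj : ∀ n, Function.Injective (m n)) : Z.IsComplex := by
  obtain ⟨d_pt, d_inj, d_d⟩ := hY
  obtain ⟨m_pt, -, m_d⟩ := hm
  refine ⟨fun n => hm_inj _ ?_, fun n a b hab hne => hm_inj _ (d_inj n _ _ ?_ fun h => hne ?_),
    fun n x => hm_inj _ ?_⟩
  · rw [m_d, m_pt, m_pt, d_pt]
  · rw [← m_d, ← m_d, hab]
  · exact hm_inj _ (by rw [m_d, m_pt, h])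
  · rw [m_d, m_d, m_pt, d_d]

theorem IsChainMap.of_comp_injective (hf : IsChainMap X Y f) (hm : IsChainMap Z Y m)
    (hm_inj : ∀ n, Function.Injective (m n)) (hmq : ∀ n x, m n (q n x) = f n x) :
    IsChainMap X Z q := by
  obtain ⟨f_pt, f_inj, f_d⟩ := hf
  obtain ⟨m_pt, -, m_d⟩ := hm
  refine ⟨fun n => hm_inj _ ?_, fun n a b hab hne => f_inj n _ _ ?_ fun h => hne ?_,
    fun n x => hm_inj _ ?_⟩
  · rw [hmq, f_pt, m_pt]
  · rw [← hmq, ← hmq, hab]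
  · exact hm_inj _ (by rw [hmq, m_pt, h])
  · rw [hmq, m_d, hmq, f_d]

end Injective

section Coimage

variable {X Y : PreCC} (f : ∀ n, X.X n → Y.X n)

/-- The levelwise coimage `Z` of `f : X → Y`. Its differential is the differential of `X` followed
by the quotient map to the coimage. -/
noncomputable def chainCoimage : PreCC where
  X n := PointedCoimage (X.pt n) (Y.pt n) (f n)
  pt n := ⟨X.pt n, Or.inl rfl⟩
  d n z := PointedCoimage.proj _ _ _ (X.d n z.1)

/-- The levelwise quotient map `q : X → Z` onto the coimage of `f`. -/
noncomputable def chainCoimageProj (n : ℤ) : X.X n → (chainCoimage f).X n :=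
  PointedCoimage.proj (X.pt n) (Y.pt n) (f n)

/-- The map `m : Z → Y` induced by `f` on its coimage. -/
def chainCoimageToCodomain (n : ℤ) : (chainCoimage f).X n → Y.X n :=
  PointedCoimage.toCodomain

variable {f}

theorem chainCoimageToCodomain_injective (hf : IsChainMap X Y f) (n : ℤ) :
    Function.Injective (chainCoimageToCodomain f n) :=
  PointedCoimage.toCodomain_injective (hf.2.1 n)

theorem chainCoimageToCodomain_proj (hf : IsChainMap X Y f) (n : ℤ) (x : X.X n) :
    chainCoimageToCodomain f n (chainCoimageProj f n x) = f n x :=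
  PointedCoimage.toCodomain_proj (hf.1 n) x

theorem isChainMap_chainCoimageToCodomain (hf : IsChainMap X Y f) :
    IsChainMap (chainCoimage f) Y (chainCoimageToCodomain f) := by
  refine ⟨hf.1, fun n a b hab _ => chainCoimageToCodomain_injective hf n hab, fun n z => ?_⟩
  calc chainCoimageToCodomain f (n - 1) ((chainCoimage f).d n z)
      = f (n - 1) (X.d n z.1) := chainCoimageToCodomain_proj hf (n - 1) (X.d n z.1)
    _ = Y.d n (chainCoimageToCodomain f n z) := hf.2.2 n z.1

end Coimage

theorem stmt12_general (X Y : PreCC) (hY : Y.IsComplex)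
    (f : ∀ n, X.X n → Y.X n) (hf : IsChainMap X Y f) :
    (chainCoimage f).IsComplex ∧
    IsChainMap X (chainCoimage f) (chainCoimageProj f) ∧
    (∀ n, Function.Surjective (chainCoimageProj f n)) ∧
    IsChainMap (chainCoimage f) Y (chainCoimageToCodomain f) ∧
    (∀ n, Function.Injective (chainCoimageToCodomain f n)) ∧
    (∀ n, ∀ x : X.X n, f n x = chainCoimageToCodomain f n (chainCoimageProj f n x)) := by
  have hm := isChainMap_chainCoimageToCodomain hf
  have hm_inj := chainCoimageToCodomain_injective hf
  have hmq := chainCoimageToCodomain_proj hf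
  exact ⟨hY.of_injective hm hm_inj, hf.of_comp_injective hm hm_inj hmq,
    fun _ => PointedCoimage.proj_surjective, hm, hm_inj, fun n x => (hmq n x).symm⟩

open Classical in
/-- **Factorization of chain maps.** Every chain map `f : X → Y` of chain complexes of
pointed sets factors as `f = m ∘ q` where `Zₙ = {x ∈ Xₙ : fₙ(x) ≠ ∗} ∪ {∗}` (with
differential `d(x) = dˣ(x)` if `fₙ₋₁(dˣ(x)) ≠ ∗` and `∗` otherwise) is a chain complex
of pointed sets, `q : X → Z` is a chain map which is levelwise surjective and injective
away from the basepoint, and `m : Z → Y` is a chain map which is levelwise injective. -/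
theorem stmt12 (X Y : PreCC) (hX : X.IsComplex) (hY : Y.IsComplex)
    (f : ∀ n, X.X n → Y.X n) (hf : IsChainMap X Y f) :
    let Z : PreCC :=
      ⟨fun n => {x : X.X n // x = X.pt n ∨ f n x ≠ Y.pt n},
       fun n => ⟨X.pt n, Or.inl rfl⟩,
       fun n x =>
         if h : f (n - 1) (X.d n x.1) ≠ Y.pt (n - 1) then ⟨X.d n x.1, Or.inr h⟩
         else ⟨X.pt (n - 1), Or.inl rfl⟩⟩
    let q : ∀ n, X.X n → Z.X n := fun n x =>
      if h : f n x ≠ Y.pt n then ⟨x, Or.inr h⟩ else ⟨X.pt n, Or.inl rfl⟩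
    let m : ∀ n, Z.X n → Y.X n := fun n x => f n x.1
    Z.IsComplex ∧
    IsChainMap X Z q ∧ (∀ n, Function.Surjective (q n)) ∧
    IsChainMap Z Y m ∧ (∀ n, Function.Injective (m n)) ∧
    (∀ n, ∀ x : X.X n, f n x = m n (q n x)) :=
  stmt12_general X Y hY f hf
end
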